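/- arXiv:2507.01529 — 5 statements merged into one kernel-verified Lean document; each statement's English description precedes it below -/
import Mathlib

section
/- For all integers n ≥ 0, the number of (2,9)-biregular overpartitions of 6n+3 satisfies B̄_{2,9}(6n+3) ≡ 0 (mod 4). -/
/-- `biregOverpartitions l1 l2 n` is the number of `(l1, l2)`-biregular overpartitions of `n`:
overpartitions of `n` (partitions in which the first occurrence of each part size may be
overlined) none of whose parts is divisible by `l1` or by `l2`.  Each partition of `n` with
admissible parts contributes `2 ^ (number of distinct part sizes)` overpartitions,
corresponding to the choice of which part sizes have their first occurrence overlined. -/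
def biregOverpartitions (l1 l2 n : ℕ) : ℕ :=
  ∑ p : Nat.Partition n,
    if ∀ x ∈ p.parts, ¬ l1 ∣ x ∧ ¬ l2 ∣ x then 2 ^ p.parts.toFinset.card else 0

/-- The partition of `n` into `n / d` equal parts `d`, for a divisor `d` of `n ≠ 0`. -/
def Nat.Partition.ofDivisor {n : ℕ} (d : ℕ) (hd : d ∈ n.divisors) : Nat.Partition n where
  parts := Multiset.replicate (n / d) d
  parts_pos := by
    intro i hi
    rw [Multiset.eq_of_mem_replicate hi]
    exact Nat.pos_of_mem_divisors hd
  parts_sum := by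
    rw [Multiset.sum_replicate, smul_eq_mul, Nat.div_mul_cancel (Nat.dvd_of_mem_divisors hd)]

theorem Nat.Partition.toFinset_parts_ofDivisor {n : ℕ} (d : ℕ) (hd : d ∈ n.divisors) :
    (Nat.Partition.ofDivisor d hd).parts.toFinset = {d} := by
  have hpos : n / d ≠ 0 := (Nat.div_pos (Nat.divisor_le hd) (Nat.pos_of_mem_divisors hd)).ne'
  rw [Nat.Partition.ofDivisor, Multiset.toFinset_replicate, if_neg hpos]

/-- Partitions of `n` with a single part size satisfying `P` correspond to the divisors of `n`
satisfying `P`. -/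
theorem Nat.Partition.card_filter_card_toFinset_eq_one {n : ℕ} (hn : n ≠ 0) (P : ℕ → Prop)
    [DecidablePred P] :
    (Finset.univ.filter fun p : Nat.Partition n =>
      p.parts.toFinset.card = 1 ∧ ∀ x ∈ p.parts, P x).card = (n.divisors.filter P).card := by
  symm
  refine Finset.card_bij
    (fun d hd => Nat.Partition.ofDivisor d (Finset.mem_filter.mp hd).1) ?_ ?_ ?_
  · intro d hd
    obtain ⟨hdn, hP⟩ := Finset.mem_filter.mp hd
    refine Finset.mem_filter.mpr ⟨Finset.mem_univ _, ?_, fun x hx => ?_⟩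
    · rw [toFinset_parts_ofDivisor, Finset.card_singleton]
    · rwa [Multiset.eq_of_mem_replicate hx]
  · intro d hd e he h
    have h' := congrArg (fun p : Nat.Partition n => p.parts.toFinset) h
    simpa only [toFinset_parts_ofDivisor, Finset.singleton_inj] using h'
  · intro p hp
    obtain ⟨-, hcard, hP⟩ := Finset.mem_filter.mp hp
    obtain ⟨d, hd⟩ := Finset.card_eq_one.mp hcard
    have hmem : d ∈ p.parts := by
      rw [← Multiset.mem_toFinset, hd]
      exact Finset.mem_singleton_self d
    have hparts : p.parts = Multiset.replicate p.parts.card d := by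
      refine Multiset.eq_replicate_card.mpr fun x hx => ?_
      rwa [← Multiset.mem_toFinset, hd, Finset.mem_singleton] at hx
    have hsum : p.parts.card * d = n := by
      have h := p.parts_sum
      rwa [hparts, Multiset.sum_replicate, smul_eq_mul] at h
    have hdn : d ∈ n.divisors := Nat.mem_divisors.mpr ⟨⟨_, hsum.symm.trans (mul_comm _ _)⟩, hn⟩
    refine ⟨d, Finset.mem_filter.mpr ⟨hdn, hP d hmem⟩, Nat.Partition.ext ?_⟩
    have hquot : n / d = p.parts.card :=
      Nat.div_eq_of_eq_mul_left (Nat.pos_of_mem_divisors hdn) hsum.symm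
    rw [hparts, ← hquot]
    rfl

/-- Modulo `4` only the partitions with a single part size contribute. -/
theorem biregOverpartitions_modEq_four (l1 l2 : ℕ) {n : ℕ} (hn : n ≠ 0) :
    biregOverpartitions l1 l2 n ≡
      2 * (n.divisors.filter fun d => ¬ l1 ∣ d ∧ ¬ l2 ∣ d).card [MOD 4] := by
  rw [← Nat.Partition.card_filter_card_toFinset_eq_one hn, biregOverpartitions,
    Finset.card_filter, Finset.mul_sum]
  refine Nat.ModEq.sum fun p _ => ?_
  have hpos : p.parts.toFinset.card ≠ 0 := by
    intro h
    have hsum := p.parts_sum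
    rw [Multiset.toFinset_eq_empty.mp (Finset.card_eq_zero.mp h), Multiset.sum_zero] at hsum
    exact hn hsum.symm
  by_cases hP : ∀ x ∈ p.parts, ¬ l1 ∣ x ∧ ¬ l2 ∣ x
  · by_cases hcard : p.parts.toFinset.card = 1
    · rw [if_pos hP, if_pos ⟨hcard, hP⟩, hcard]
      rfl
    · rw [if_pos hP, if_neg fun h => hcard h.1, mul_zero]
      exact (Nat.modEq_zero_iff_dvd).mpr (pow_dvd_pow 2 (by omega : 2 ≤ _))
  · rw [if_neg hP, if_neg fun h => hP h.2, mul_zero]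

/-- For `m` divisible by `p`, multiplication by `p` matches the divisors of `m` prime to `p` with
those exactly divisible by `p`. -/
theorem Nat.card_divisors_filter_not_sq_dvd {p m : ℕ} (hp : p.Prime) (hpm : p ∣ m) :
    (m.divisors.filter fun d => ¬ p ^ 2 ∣ d).card =
      2 * (m.divisors.filter fun d => ¬ p ∣ d).card := by
  have hunion : (m.divisors.filter fun d => ¬ p ^ 2 ∣ d) =
      (m.divisors.filter fun d => ¬ p ∣ d) ∪
        (m.divisors.filter fun d => ¬ p ∣ d).image (p * ·) := by
    ext d
    simp only [Finset.mem_union, Finset.mem_image, Finset.mem_filter, Nat.mem_divisors]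
    constructor
    · rintro ⟨⟨hdm, hm⟩, hd⟩
      by_cases hpd : p ∣ d
      · obtain ⟨e, rfl⟩ := hpd
        refine Or.inr ⟨e, ⟨⟨(Dvd.intro_left p rfl).trans hdm, hm⟩, fun hpe => hd ?_⟩, rfl⟩
        rw [sq]
        exact mul_dvd_mul_left p hpe
      · exact Or.inl ⟨⟨hdm, hm⟩, hpd⟩
    · rintro (⟨hdm, hpd⟩ | ⟨e, ⟨⟨hem, hm⟩, hpe⟩, rfl⟩)
      · exact ⟨hdm, fun h => hpd ((dvd_pow_self p two_ne_zero).trans h)⟩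
      · refine ⟨⟨((Nat.Prime.coprime_iff_not_dvd hp).mpr hpe).mul_dvd_of_dvd_of_dvd hpm hem, hm⟩,
          fun h => hpe ?_⟩
        rw [sq] at h
        exact Nat.dvd_of_mul_dvd_mul_left hp.pos h
  have hdisj : Disjoint (m.divisors.filter fun d => ¬ p ∣ d)
      ((m.divisors.filter fun d => ¬ p ∣ d).image (p * ·)) := by
    refine Finset.disjoint_left.mpr fun d hd hd' => ?_
    obtain ⟨e, -, rfl⟩ := Finset.mem_image.mp hd'
    exact (Finset.mem_filter.mp hd).2 (dvd_mul_right p e)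
  rw [hunion, Finset.card_union_of_disjoint hdisj,
    Finset.card_image_of_injective _ (mul_right_injective₀ hp.ne_zero), two_mul]

theorem B29_mod4_6n3 (n : ℕ) : 4 ∣ biregOverpartitions 2 9 (6 * n + 3) := by
  have hodd : ((6 * n + 3).divisors.filter fun d => ¬ 2 ∣ d ∧ ¬ 9 ∣ d) =
      (6 * n + 3).divisors.filter fun d => ¬ 3 ^ 2 ∣ d := by
    refine Finset.filter_congr fun d hd => and_iff_right fun h => ?_
    have := h.trans (Nat.dvd_of_mem_divisors hd)
    omega
  refine (Nat.modEq_zero_iff_dvd).mp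
    ((biregOverpartitions_modEq_four 2 9 (Nat.succ_ne_zero _)).trans ?_)
  rw [hodd, Nat.card_divisors_filter_not_sq_dvd Nat.prime_three (by omega), ← mul_assoc]
  exact (Nat.modEq_zero_iff_dvd).mpr (dvd_mul_right 4 _)
end

section
/- For all integers n ≥ 0, the number of (2,9)-biregular overpartitions of 6n+5 satisfies B̄_{2,9}(6n+5) ≡ 0 (mod 8). -/
/-- A finite set has as many elements, modulo `2`, as an involution on it has fixed points. -/
theorem Finset.card_modEq_card_filter_fixed {α : Type*} [DecidableEq α] (s : Finset α) (f : α → α)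
    (hs : ∀ a ∈ s, f a ∈ s) (hf : ∀ a ∈ s, f (f a) = a) :
    s.card ≡ (s.filter fun a => f a = a).card [MOD 2] := by
  rw [← ZMod.natCast_eq_natCast_iff,
    ← Finset.card_filter_add_card_filter_not (s := s) (fun a => f a = a)]
  have h : ((s.filter fun a => ¬ f a = a).card : ZMod 2) = 0 := by
    rw [Finset.cast_card]
    refine Finset.sum_involution (fun a _ => f a) (fun _ _ => by decide) ?_ ?_ ?_
    · intro a ha _
      exact (Finset.mem_filter.1 ha).2
    · intro a ha
      obtain ⟨h1, h2⟩ := Finset.mem_filter.1 ha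
      exact Finset.mem_filter.2 ⟨hs a h1, fun h => h2 (by rw [hf a h1] at h; exact h.symm)⟩
    · intro a ha
      exact hf a (Finset.mem_filter.1 ha).1
  push_cast
  rw [h, add_zero]

/-- The triples `(x, y, z)` with `y, z > 0` and `x ^ 2 + 4 * y * z = m`. -/
def windmills (m : ℕ) : Finset (ℕ × ℕ × ℕ) :=
  (Finset.range (m + 1) ×ˢ Finset.range (m + 1) ×ˢ Finset.range (m + 1)).filter fun t =>
    0 < t.2.1 ∧ 0 < t.2.2 ∧ t.1 ^ 2 + 4 * t.2.1 * t.2.2 = m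

theorem mem_windmills {m x y z : ℕ} :
    (x, y, z) ∈ windmills m ↔ 0 < y ∧ 0 < z ∧ x ^ 2 + 4 * y * z = m := by
  simp only [windmills, Finset.mem_filter, Finset.mem_product, Finset.mem_range,
    and_iff_right_iff_imp]
  rintro ⟨hy, hz, h⟩
  refine ⟨?_, ?_, ?_⟩ <;> nlinarith [Nat.mul_pos hy hz]

/-- Zagier's involution on windmills. -/
def zagierMap (t : ℕ × ℕ × ℕ) : ℕ × ℕ × ℕ :=
  if t.1 + t.2.2 < t.2.1 then (t.1 + 2 * t.2.2, t.2.2, t.2.1 - t.1 - t.2.2)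
  else if t.1 < 2 * t.2.1 then (2 * t.2.1 - t.1, t.2.1, t.1 + t.2.2 - t.2.1)
  else (t.1 - 2 * t.2.1, t.1 + t.2.2 - t.2.1, t.2.1)

theorem ne_of_mem_windmills {m x y z : ℕ} (hodd : m % 2 = 1) (hsq : ¬ IsSquare m)
    (h : (x, y, z) ∈ windmills m) : x + z ≠ y ∧ x ≠ 2 * y ∧ 0 < x := by
  obtain ⟨-, -, h⟩ := mem_windmills.1 h
  refine ⟨?_, ?_, ?_⟩
  · rintro rfl
    exact hsq ⟨x + 2 * z, by rw [← h]; ring⟩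
  · rintro rfl
    have : (2 * y) ^ 2 + 4 * y * z = 2 * (2 * y ^ 2 + 2 * y * z) := by ring
    omega
  · rw [Nat.pos_iff_ne_zero]
    rintro rfl
    have : 0 ^ 2 + 4 * y * z = 2 * (2 * y * z) := by ring
    omega

theorem zagierMap_mem_windmills {m : ℕ} (hodd : m % 2 = 1) (hsq : ¬ IsSquare m) :
    ∀ t ∈ windmills m, zagierMap t ∈ windmills m := by
  rintro ⟨x, y, z⟩ ht
  obtain ⟨h1, h2, h3⟩ := ne_of_mem_windmills hodd hsq ht
  obtain ⟨hy, hz, h⟩ := mem_windmills.1 ht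
  simp only [zagierMap]
  split_ifs with ha hb
  · obtain ⟨k, rfl⟩ := Nat.exists_eq_add_of_lt ha
    have : x + z + k + 1 - x - z = k + 1 := by omega
    rw [this, mem_windmills]
    exact ⟨hz, by omega, by rw [← h]; ring⟩
  · rw [mem_windmills]
    refine ⟨hy, by omega, ?_⟩
    zify [hb.le, show y ≤ x + z by omega] at h ⊢
    rw [← h]; ring
  · rw [mem_windmills]
    refine ⟨by omega, hy, ?_⟩
    zify [show 2 * y ≤ x by omega, show y ≤ x + z by omega] at h ⊢
    rw [← h]; ring

theorem zagierMap_zagierMap {m : ℕ} (hodd : m % 2 = 1) (hsq : ¬ IsSquare m) :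
    ∀ t ∈ windmills m, zagierMap (zagierMap t) = t := by
  rintro ⟨x, y, z⟩ ht
  obtain ⟨h1, h2, h3⟩ := ne_of_mem_windmills hodd hsq ht
  obtain ⟨hy, hz, -⟩ := mem_windmills.1 ht
  simp only [zagierMap]
  split_ifs <;> simp only [Prod.mk.injEq, true_and, and_true] at * <;> omega

/-- The representations of `m` as `x ^ 2 + 4 * y ^ 2`. -/
def evenOddSquares (m : ℕ) : Finset (ℕ × ℕ) :=
  (Finset.range (m + 1) ×ˢ Finset.range (m + 1)).filter fun t => t.1 ^ 2 + 4 * t.2 ^ 2 = m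

theorem mem_evenOddSquares {m x y : ℕ} : (x, y) ∈ evenOddSquares m ↔ x ^ 2 + 4 * y ^ 2 = m := by
  simp only [evenOddSquares, Finset.mem_filter, Finset.mem_product, Finset.mem_range,
    and_iff_right_iff_imp]
  intro h
  constructor <;> nlinarith

theorem card_windmills_modEq_card_evenOddSquares {m : ℕ} (hsq : ¬ IsSquare m) :
    (windmills m).card ≡ (evenOddSquares m).card [MOD 2] := by
  refine (Finset.card_modEq_card_filter_fixed (windmills m) (fun t => (t.1, t.2.2, t.2.1))
    ?_ (fun _ _ => rfl)).trans (congrArg (· % 2) ?_)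
  · rintro ⟨x, y, z⟩ h
    rw [mem_windmills] at *
    exact ⟨h.2.1, h.1, by rw [← h.2.2]; ring⟩
  · symm
    refine Finset.card_bij (fun t _ => (t.1, t.2, t.2)) ?_ ?_ ?_
    · rintro ⟨x, y⟩ h
      rw [mem_evenOddSquares] at h
      have hy : 0 < y := by
        rw [Nat.pos_iff_ne_zero]
        rintro rfl
        exact hsq ⟨x, by rw [← h]; ring⟩
      simp only [Finset.mem_filter, mem_windmills, and_true]
      exact ⟨hy, hy, by rw [← h]; ring⟩
    · rintro ⟨x, y⟩ - ⟨x', y'⟩ - h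
      simp_all
    · rintro ⟨x, y, z⟩ h
      simp only [Finset.mem_filter, mem_windmills, Prod.mk.injEq] at h
      obtain ⟨⟨-, -, h⟩, -, rfl, -⟩ := h
      exact ⟨(x, z), mem_evenOddSquares.2 (by rw [← h]; ring), rfl⟩

theorem card_windmills_modEq_card_small_divisors {m : ℕ} (hm : m % 4 = 1) (hsq : ¬ IsSquare m) :
    (windmills m).card ≡ (m.divisors.filter fun d => d ^ 2 < m).card [MOD 2] := by
  have hodd : m % 2 = 1 := by omega
  refine (Finset.card_modEq_card_filter_fixed (windmills m) zagierMap
    (zagierMap_mem_windmills hodd hsq) (zagierMap_zagierMap hodd hsq)).trans (congrArg (· % 2) ?_)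
  refine Finset.card_bij (fun t _ => t.1) ?_ ?_ ?_
  · rintro ⟨x, y, z⟩ h
    obtain ⟨hw, hfix⟩ := Finset.mem_filter.1 h
    obtain ⟨h1, h2, h3⟩ := ne_of_mem_windmills hodd hsq hw
    obtain ⟨hy, hz, h⟩ := mem_windmills.1 hw
    have hxy : x = y := by
      simp only [zagierMap] at hfix
      split_ifs at hfix <;> simp only [Prod.mk.injEq] at hfix <;> omega
    subst hxy
    simp only [Finset.mem_filter, Nat.mem_divisors]
    exact ⟨⟨⟨x + 4 * z, by rw [← h]; ring⟩, by omega⟩, by nlinarith [Nat.mul_pos hy hz]⟩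
  · rintro ⟨x, y, z⟩ h ⟨x', y', z'⟩ h' hx
    obtain ⟨hw, hfix⟩ := Finset.mem_filter.1 h
    obtain ⟨hw', hfix'⟩ := Finset.mem_filter.1 h'
    obtain ⟨h1, h2, h3⟩ := ne_of_mem_windmills hodd hsq hw
    obtain ⟨h1', h2', h3'⟩ := ne_of_mem_windmills hodd hsq hw'
    obtain ⟨hy, hz, h⟩ := mem_windmills.1 hw
    obtain ⟨hy', hz', h'⟩ := mem_windmills.1 hw'
    have hxy : x = y := by
      simp only [zagierMap] at hfix
      split_ifs at hfix <;> simp only [Prod.mk.injEq] at hfix <;> omega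
    have hxy' : x' = y' := by
      simp only [zagierMap] at hfix'
      split_ifs at hfix' <;> simp only [Prod.mk.injEq] at hfix' <;> omega
    simp only at hx
    subst hxy hxy' hx
    have : 4 * x * z = 4 * x * z' := by omega
    have := Nat.eq_of_mul_eq_mul_left (by omega) this
    rw [this]
  · intro d hd
    simp only [Finset.mem_filter, Nat.mem_divisors] at hd
    obtain ⟨⟨⟨e, rfl⟩, h0⟩, hlt⟩ := hd
    have hde : d < e := by nlinarith
    have hmod : d % 4 = e % 4 := by
      have h1 := Nat.mul_mod d e 4
      have h2 : d % 4 < 4 := Nat.mod_lt _ (by norm_num)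
      have h3 : e % 4 < 4 := Nat.mod_lt _ (by norm_num)
      rw [hm] at h1
      interval_cases d % 4 <;> interval_cases e % 4 <;> omega
    obtain ⟨z, rfl⟩ : ∃ z, e = d + 4 * z := ⟨(e - d) / 4, by omega⟩
    have hd : 0 < d := by
      rw [Nat.pos_iff_ne_zero]
      rintro rfl
      simp at h0
    refine ⟨(d, d, z), ?_, rfl⟩
    rw [Finset.mem_filter, mem_windmills]
    refine ⟨⟨hd, by omega, by ring⟩, ?_⟩
    simp only [zagierMap]
    rw [if_neg (by omega), if_pos (by omega)]
    simp only [Prod.mk.injEq, true_and]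
    omega

/-- Pairing each divisor with its complement. -/
theorem sum_divisors_eq_sum_small_divisors {m : ℕ} (hsq : ¬ IsSquare m) (f : ℕ → ℤ) :
    ∑ d ∈ m.divisors, f d = ∑ d ∈ m.divisors with d ^ 2 < m, (f d + f (m / d)) := by
  rw [← Finset.sum_filter_add_sum_filter_not m.divisors (fun d => d ^ 2 < m),
    Finset.sum_add_distrib]
  congr 1
  have key : ∀ d e : ℕ, d * e ≠ 0 → ¬ IsSquare (d * e) → (d ^ 2 < d * e ↔ ¬ e ^ 2 < d * e) := by
    intro d e h0 hs
    have hne : d ≠ e := by rintro rfl; exact hs ⟨d, rfl⟩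
    have hd : 0 < d := Nat.pos_of_ne_zero (left_ne_zero_of_mul h0)
    have he : 0 < e := Nat.pos_of_ne_zero (right_ne_zero_of_mul h0)
    rw [sq, sq, Nat.mul_lt_mul_left hd, Nat.mul_lt_mul_right he]
    omega
  refine Finset.sum_nbij' (fun d => m / d) (fun d => m / d) ?_ ?_ ?_ ?_ ?_
  · intro d hd
    simp only [Finset.mem_filter, Nat.mem_divisors] at hd ⊢
    obtain ⟨⟨⟨e, rfl⟩, h0⟩, h⟩ := hd
    rw [Nat.mul_div_cancel_left _ (Nat.pos_of_ne_zero (left_ne_zero_of_mul h0))]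
    refine ⟨⟨dvd_mul_left _ _, h0⟩, ?_⟩
    by_contra h'
    exact h ((key d e h0 hsq).2 h')
  · intro d hd
    simp only [Finset.mem_filter, Nat.mem_divisors] at hd ⊢
    obtain ⟨⟨⟨e, rfl⟩, h0⟩, h⟩ := hd
    rw [Nat.mul_div_cancel_left _ (Nat.pos_of_ne_zero (left_ne_zero_of_mul h0))]
    exact ⟨⟨dvd_mul_left _ _, h0⟩, (key d e h0 hsq).1 h⟩
  · intro d hd
    simp only [Finset.mem_filter, Nat.mem_divisors] at hd
    exact Nat.div_div_self hd.1.1 hd.1.2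
  · intro d hd
    simp only [Finset.mem_filter, Nat.mem_divisors] at hd
    exact Nat.div_div_self hd.1.1 hd.1.2
  · intro d hd
    simp only [Finset.mem_filter, Nat.mem_divisors] at hd
    rw [Nat.div_div_self hd.1.1 hd.1.2]

theorem four_dvd_sum_divisors_add {m : ℕ} (hodd : m % 2 = 1) (hsq : ¬ IsSquare m) :
    (4 : ℤ) ∣ ∑ d ∈ m.divisors, (2 - (d : ℤ)) + 2 * (evenOddSquares m).card := by
  rw [sum_divisors_eq_sum_small_divisors hsq]
  have hmul : ∀ d ∈ m.divisors, d * (m / d) = m := fun d hd =>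
    Nat.mul_div_cancel' (Nat.dvd_of_mem_divisors hd)
  have hmod : ∀ d e : ℕ, (d * e) % 4 = (d % 4) * (e % 4) % 4 := fun d e => Nat.mul_mod d e 4
  rcases (by omega : m % 4 = 1 ∨ m % 4 = 3) with hm | hm
  · have hC := (card_windmills_modEq_card_evenOddSquares hsq).symm.trans
      (card_windmills_modEq_card_small_divisors hm hsq)
    have hS : (4 : ℤ) ∣ ∑ d ∈ m.divisors with d ^ 2 < m,
        (2 - (d : ℤ) + (2 - ((m / d : ℕ) : ℤ)) - 2) := by
      refine Finset.dvd_sum fun d hd => ?_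
      have h := hmul d (Finset.mem_filter.1 hd).1
      generalize m / d = e at h ⊢
      have h1 := hmod d e
      rw [h, hm] at h1
      have h2 : d % 4 < 4 := Nat.mod_lt _ (by norm_num)
      have h3 : e % 4 < 4 := Nat.mod_lt _ (by norm_num)
      have : (d % 4 = 1 ∧ e % 4 = 1) ∨ (d % 4 = 3 ∧ e % 4 = 3) := by
        interval_cases d % 4 <;> interval_cases e % 4 <;> omega
      omega
    rw [Finset.sum_sub_distrib, Finset.sum_const, nsmul_eq_mul] at hS
    unfold Nat.ModEq at hC
    omega
  · have hC : (evenOddSquares m).card = 0 := by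
      rw [Finset.card_eq_zero, Finset.eq_empty_iff_forall_notMem]
      rintro ⟨x, y⟩ h
      rw [mem_evenOddSquares] at h
      have h1 := hmod x x
      have h2 : x % 4 < 4 := Nat.mod_lt _ (by norm_num)
      rw [← sq, show x ^ 2 % 4 = 3 by omega] at h1
      interval_cases x % 4 <;> omega
    rw [hC]
    simp only [Nat.cast_zero, mul_zero, add_zero]
    refine Finset.dvd_sum fun d hd => ?_
    have h := hmul d (Finset.mem_filter.1 hd).1
    generalize m / d = e at h ⊢
    have h1 := hmod d e
    rw [h, hm] at h1
    have h2 : d % 4 < 4 := Nat.mod_lt _ (by norm_num)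
    have h3 : e % 4 < 4 := Nat.mod_lt _ (by norm_num)
    have : (d % 4 = 1 ∧ e % 4 = 3) ∨ (d % 4 = 3 ∧ e % 4 = 1) := by
      interval_cases d % 4 <;> interval_cases e % 4 <;> omega
    omega

theorem odd_card_divisors_iff_isSquare {n : ℕ} (hn : n ≠ 0) : Odd n.divisors.card ↔ IsSquare n := by
  have h := Finset.card_modEq_card_filter_fixed n.divisors (fun d => n / d)
    (fun d hd => Nat.mem_divisors.2 ⟨Nat.div_dvd_of_dvd (Nat.dvd_of_mem_divisors hd), hn⟩)
    (fun d hd => Nat.div_div_self (Nat.dvd_of_mem_divisors hd) hn)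
  have hfix : ∀ d, d ∈ n.divisors.filter (fun d => n / d = d) ↔ d * d = n := by
    intro d
    rw [Finset.mem_filter, Nat.mem_divisors]
    constructor
    · rintro ⟨⟨hd, -⟩, h⟩
      nth_rw 2 [← h]
      exact Nat.mul_div_cancel' hd
    · rintro rfl
      exact ⟨⟨dvd_mul_left _ _, hn⟩, Nat.mul_div_cancel _ (by
        rcases Nat.eq_zero_or_pos d with rfl | h
        · simp at hn
        · exact h)⟩
  rw [Nat.odd_iff, h]
  constructor
  · intro h1
    obtain ⟨d, hd⟩ := Finset.card_pos.1 (show 0 < _ by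
      rw [Nat.pos_iff_ne_zero]; intro h0; rw [h0] at h1; simp at h1)
    exact ⟨d, ((hfix d).1 hd).symm⟩
  · rintro ⟨d, hd⟩
    have : n.divisors.filter (fun d => n / d = d) = {d} := by
      ext e
      rw [hfix, Finset.mem_singleton, hd, Nat.mul_self_inj]
    rw [this, Finset.card_singleton]

/-- The divisors of `n` divisible neither by `2` nor by `9`. -/
def biregDivisors (n : ℕ) : Finset ℕ :=
  n.divisors.filter fun d => ¬ 2 ∣ d ∧ ¬ 9 ∣ d

theorem even_card_biregDivisors {n : ℕ} (h3 : 3 ∣ n) : Even (biregDivisors n).card := by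
  have h := Finset.card_modEq_card_filter_fixed (biregDivisors n)
    (fun d => if 3 ∣ d then d / 3 else 3 * d) ?_ ?_
  · rw [Finset.filter_false_of_mem, Finset.card_empty] at h
    · exact (Nat.even_iff).2 h
    · intro d hd
      have := Nat.pos_of_mem_divisors (Finset.mem_filter.1 hd).1
      split_ifs <;> omega
  · intro d hd
    simp only [biregDivisors, Finset.mem_filter, Nat.mem_divisors] at hd ⊢
    obtain ⟨⟨hd, hn⟩, h2, h9⟩ := hd
    split_ifs with h
    · exact ⟨⟨(Nat.div_dvd_of_dvd h).trans hd, hn⟩, by omega, by omega⟩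
    · refine ⟨⟨Nat.Coprime.mul_dvd_of_dvd_of_dvd ?_ h3 hd, hn⟩, by omega, by omega⟩
      exact (Nat.Prime.coprime_iff_not_dvd Nat.prime_three).2 h
  · intro d hd
    have h9 := (Finset.mem_filter.1 hd).2.2
    split_ifs <;> omega

theorem odd_card_biregDivisors_iff {n : ℕ} (hn : n ≠ 0) (h3 : ¬ 3 ∣ n) :
    Odd (biregDivisors n).card ↔ ∃ x, n = x ^ 2 ∨ n = 2 * x ^ 2 := by
  obtain ⟨s, u, hu, rfl⟩ := Nat.exists_eq_two_pow_mul_odd hn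
  have hu0 : u ≠ 0 := right_ne_zero_of_mul hn
  have heq : biregDivisors (2 ^ s * u) = u.divisors := by
    ext d
    simp only [biregDivisors, Finset.mem_filter, Nat.mem_divisors]
    constructor
    · rintro ⟨⟨hd, -⟩, h2, -⟩
      refine ⟨Nat.Coprime.dvd_of_dvd_mul_left ?_ hd, hu0⟩
      exact (Nat.Coprime.pow_left s ((Nat.Prime.coprime_iff_not_dvd Nat.prime_two).2 h2)).symm
    · rintro ⟨hd, -⟩
      have hd' : d ∣ 2 ^ s * u := Dvd.dvd.mul_left hd _
      refine ⟨⟨hd', hn⟩, fun h => ?_, fun h => ?_⟩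
      · exact (Nat.not_even_iff_odd.2 hu) (even_iff_two_dvd.2 (h.trans hd))
      · exact h3 (((by norm_num : 3 ∣ 9).trans h).trans hd')
  rw [heq, odd_card_divisors_iff_isSquare hu0]
  constructor
  · rintro ⟨v, rfl⟩
    rcases Nat.even_or_odd' s with ⟨t, rfl | rfl⟩
    · exact ⟨2 ^ t * v, Or.inl (by ring)⟩
    · exact ⟨2 ^ t * v, Or.inr (by ring)⟩
  · rintro ⟨x, hx⟩
    have hx0 : x ≠ 0 := by
      rintro rfl
      simp at hx
      exact hu0 hx
    obtain ⟨t, v, hv, rfl⟩ := Nat.exists_eq_two_pow_mul_odd hx0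
    have key : ∀ k, 2 ^ s * u = 2 ^ k * (v * v) → u = v * v := by
      intro k hk
      have hvv : Odd (v * v) := hv.mul hv
      have h1 : u ∣ v * v := by
        refine Nat.Coprime.dvd_of_dvd_mul_left (k := u) (m := 2 ^ k) ?_ (hk ▸ dvd_mul_left _ _)
        exact (Nat.Coprime.pow_left k (Nat.coprime_two_left.2 hu)).symm
      have h2 : v * v ∣ u := by
        refine Nat.Coprime.dvd_of_dvd_mul_left (k := v * v) (m := 2 ^ s) ?_
          (hk ▸ dvd_mul_left _ _)
        exact (Nat.Coprime.pow_left s (Nat.coprime_two_left.2 hvv)).symm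
      exact Nat.dvd_antisymm h1 h2
    rcases hx with hx | hx
    · exact ⟨v, key (2 * t) (by rw [hx]; ring)⟩
    · exact ⟨v, key (2 * t + 1) (by rw [hx]; ring)⟩

theorem odd_card_biregDivisors_iff_isSquare {n : ℕ} (h : n % 3 = 1) :
    Odd (biregDivisors n).card ↔ IsSquare n := by
  rw [odd_card_biregDivisors_iff (by omega) (by omega)]
  constructor
  · rintro ⟨x, hx | hx⟩
    · exact ⟨x, by rw [hx, sq]⟩
    · have h1 := Nat.mul_mod x x 3
      have h2 : x % 3 < 3 := Nat.mod_lt _ (by norm_num)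
      rw [sq] at hx
      interval_cases x % 3 <;> omega
  · rintro ⟨x, hx⟩
    exact ⟨x, Or.inl (by rw [hx, sq])⟩

/-- In a sum congruent to `2` modulo `3`, both summands contribute an odd number of divisors
exactly when both are squares. -/
theorem odd_mul_card_biregDivisors_iff {a b : ℕ} (h : (a + b) % 3 = 2) :
    Odd ((biregDivisors a).card * (biregDivisors b).card) ↔ IsSquare a ∧ IsSquare b := by
  have hsq : ∀ x : ℕ, IsSquare x → x % 3 = 0 ∨ x % 3 = 1 := by
    rintro _ ⟨x, rfl⟩
    have h1 := Nat.mul_mod x x 3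
    have h2 : x % 3 < 3 := Nat.mod_lt _ (by norm_num)
    interval_cases x % 3 <;> omega
  rw [Nat.odd_mul]
  by_cases h1 : a % 3 = 1
  · rw [odd_card_biregDivisors_iff_isSquare h1, odd_card_biregDivisors_iff_isSquare (by omega)]
  · constructor
    · rintro ⟨ha, hb⟩
      rcases (by omega : 3 ∣ a ∨ 3 ∣ b) with h | h
      · exact absurd (even_card_biregDivisors h) (Nat.not_even_iff_odd.2 ha)
      · exact absurd (even_card_biregDivisors h) (Nat.not_even_iff_odd.2 hb)
    · rintro ⟨ha, hb⟩
      have := hsq a ha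
      have := hsq b hb
      omega

theorem sum_antidiagonal_eq_two_mul {m : ℕ} (hodd : m % 2 = 1) (c : ℕ → ℕ) :
    ∑ p ∈ Finset.HasAntidiagonal.antidiagonal m, c p.1 * c p.2 =
      2 * ∑ p ∈ Finset.HasAntidiagonal.antidiagonal m with p.1 % 2 = 0, c p.1 * c p.2 := by
  rw [two_mul, ← Finset.sum_filter_add_sum_filter_not _ (fun p : ℕ × ℕ => p.1 % 2 = 0)]
  congr 1
  refine Finset.sum_nbij' Prod.swap Prod.swap ?_ ?_ (fun _ _ => rfl) (fun _ _ => rfl)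
    (fun _ _ => mul_comm _ _)
  all_goals
    rintro ⟨a, b⟩ h
    simp only [Finset.mem_filter, Finset.HasAntidiagonal.mem_antidiagonal, Prod.swap] at h ⊢
    omega

theorem sum_card_biregDivisors_modEq {m : ℕ} (hm : m % 6 = 5) :
    ∑ p ∈ Finset.HasAntidiagonal.antidiagonal m with p.1 % 2 = 0,
      (biregDivisors p.1).card * (biregDivisors p.2).card ≡ (evenOddSquares m).card [MOD 2] := by
  have hcard : (evenOddSquares m).card =
      (((Finset.HasAntidiagonal.antidiagonal m).filter fun p => p.1 % 2 = 0).filter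
      fun p => Odd ((biregDivisors p.1).card * (biregDivisors p.2).card)).card := by
    refine Finset.card_bij (fun t _ => (4 * t.2 ^ 2, t.1 ^ 2)) ?_ ?_ ?_
    · rintro ⟨x, y⟩ h
      rw [mem_evenOddSquares] at h
      simp only [Finset.mem_filter, Finset.HasAntidiagonal.mem_antidiagonal]
      refine ⟨⟨by omega, by omega⟩, (odd_mul_card_biregDivisors_iff (by omega)).2 ⟨?_, ?_⟩⟩
      · exact ⟨2 * y, by ring⟩
      · exact ⟨x, by ring⟩
    · rintro ⟨x, y⟩ - ⟨x', y'⟩ - h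
      simpa [and_comm] using h
    · rintro ⟨a, b⟩ h
      simp only [Finset.mem_filter, Finset.HasAntidiagonal.mem_antidiagonal] at h
      obtain ⟨⟨hab, ha⟩, h⟩ := h
      obtain ⟨⟨y, rfl⟩, ⟨x, rfl⟩⟩ := (odd_mul_card_biregDivisors_iff (by omega)).1 h
      obtain ⟨z, rfl⟩ : Even y := by
        have : Even (y * y) := Nat.even_iff.2 ha
        simpa [Nat.even_mul] using this
      refine ⟨(x, z), mem_evenOddSquares.2 (by rw [← hab]; ring), ?_⟩
      simp only [Prod.mk.injEq]
      constructor <;> ring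
  rw [hcard, Finset.card_filter, ← ZMod.natCast_eq_natCast_iff]
  push_cast
  refine Finset.sum_congr rfl fun p _ => ?_
  split_ifs with h
  · exact_mod_cast (ZMod.natCast_eq_one_iff_odd).2 h
  · exact_mod_cast (ZMod.natCast_eq_zero_iff_even).2 (Nat.not_odd_iff_even.1 h)

/-- Modulo `8`, only the first two elementary symmetric functions matter, and the second one is
determined by power sums. -/
theorem exists_prod_one_add_two_mul {ι R : Type*} [CommRing R] (s : Finset ι) (g : ι → R) :
    ∃ E Q : R, ∏ i ∈ s, (1 + 2 * g i) = 1 + 2 * ∑ i ∈ s, g i + 4 * E + 8 * Q ∧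
      (∑ i ∈ s, g i) ^ 2 = ∑ i ∈ s, g i ^ 2 + 2 * E := by
  classical
  induction s using Finset.induction_on with
  | empty => exact ⟨0, 0, by simp, by simp⟩
  | insert a s ha ih =>
    obtain ⟨E, Q, h1, h2⟩ := ih
    refine ⟨E + g a * ∑ i ∈ s, g i, Q + g a * E + 2 * g a * Q, ?_, ?_⟩
    · rw [Finset.prod_insert ha, Finset.sum_insert ha, h1]; ring
    · rw [Finset.sum_insert ha, Finset.sum_insert ha, add_sq, h2]; ring

/-- The series `∑ X ^ (i * k)` over `k ≥ 1`, or zero if `i` is divisible by `2` or `9`. -/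
noncomputable def partSeries (i : ℕ) : PowerSeries ℤ :=
  PowerSeries.mk fun n => if i ∈ biregDivisors n then 1 else 0

open scoped PowerSeries.WithPiTopology in
theorem coeff_tsum_smul_X_pow {R : Type*} [CommSemiring R] [TopologicalSpace R] [T2Space R]
    (a : R) (i n : ℕ) :
    (∑' j : ℕ, a • (PowerSeries.X : PowerSeries R) ^ ((i + 1) * (j + 1))).coeff n =
      if i + 1 ∈ n.divisors then a else 0 := by
  rw [(Nat.Partition.summable_genFun_term (fun _ _ => a) i).map_tsum _
    (PowerSeries.WithPiTopology.continuous_coeff R n)]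
  simp only [map_smul, PowerSeries.coeff_X_pow, smul_eq_mul, Nat.mem_divisors]
  split_ifs with h
  · obtain ⟨⟨k, rfl⟩, h0⟩ := h
    obtain ⟨k, rfl⟩ := Nat.exists_eq_succ_of_ne_zero (right_ne_zero_of_mul h0)
    rw [tsum_eq_single k]
    · simp
    · intro j hj
      have : (i + 1) * k.succ ≠ (i + 1) * (j + 1) := fun h =>
        hj (by have := Nat.eq_of_mul_eq_mul_left (by omega) h; omega)
      simp [this]
  · convert tsum_zero with j
    rw [if_neg, mul_zero]
    rintro rfl
    exact h ⟨dvd_mul_right _ _, by positivity⟩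

open scoped PowerSeries.WithPiTopology in
theorem hasProd_one_add_two_mul_partSeries :
    HasProd (fun i => 1 + 2 * partSeries (i + 1)) (Nat.Partition.genFun
      (fun i _ => if ¬ 2 ∣ i ∧ ¬ 9 ∣ i then (2 : ℤ) else 0)) := by
  convert Nat.Partition.hasProd_genFun (fun i _ => if ¬ 2 ∣ i ∧ ¬ 9 ∣ i then (2 : ℤ) else 0)
    using 1
  · rfl
  funext i
  congr 1
  ext n
  refine Eq.trans ?_ (coeff_tsum_smul_X_pow _ i n).symm
  rw [show (2 : PowerSeries ℤ) = PowerSeries.C 2 by simp, PowerSeries.coeff_C_mul, partSeries,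
    PowerSeries.coeff_mk]
  simp only [biregDivisors, Finset.mem_filter]
  split_ifs <;> simp_all

theorem natCast_biregOverpartitions (m : ℕ) :
    (biregOverpartitions 2 9 m : ℤ) = (Nat.Partition.genFun
      (fun i _ => if ¬ 2 ∣ i ∧ ¬ 9 ∣ i then (2 : ℤ) else 0)).coeff m := by
  rw [Nat.Partition.coeff_genFun, biregOverpartitions]
  push_cast
  refine Finset.sum_congr rfl fun p _ => ?_
  rw [Finsupp.prod, Multiset.toFinsupp_support]
  split_ifs with h
  · rw [Finset.prod_congr rfl fun i hi => if_pos (h i (Multiset.mem_toFinset.1 hi)),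
      Finset.prod_const]
  · push Not at h
    obtain ⟨x, hx, h⟩ := h
    exact (Finset.prod_eq_zero (Multiset.mem_toFinset.2 hx) (if_neg fun h' => h'.2 (h h'.1))).symm

open scoped PowerSeries.WithPiTopology in
theorem exists_natCast_biregOverpartitions_eq_coeff_prod (m : ℕ) :
    ∃ s : Finset ℕ, Finset.range m ⊆ s ∧ (biregOverpartitions 2 9 m : ℤ) =
      (∏ i ∈ s, (1 + 2 * partSeries (i + 1))).coeff m := by
  have h := hasProd_one_add_two_mul_partSeries
  rw [HasProd, PowerSeries.WithPiTopology.tendsto_iff_coeff_tendsto] at h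
  have h1 := h m
  rw [← natCast_biregOverpartitions, nhds_discrete, Filter.tendsto_pure] at h1
  obtain ⟨s, hs, hs'⟩ := (h1.and (Filter.eventually_ge_atTop (Finset.range m))).exists
  exact ⟨s, hs', hs.symm⟩

theorem sum_ite_mem_biregDivisors {m n : ℕ} (hn : n ≤ m) {s : Finset ℕ}
    (hs : Finset.range m ⊆ s) (f : ℕ → ℤ) :
    ∑ i ∈ s, (if i + 1 ∈ biregDivisors n then f (i + 1) else 0) = ∑ d ∈ biregDivisors n, f d := by
  rw [← Finset.sum_filter]
  refine Finset.sum_nbij (· + 1) ?_ ?_ ?_ (fun _ _ => rfl)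
  · intro i hi
    exact (Finset.mem_filter.1 hi).2
  · intro i _ j _ h
    exact Nat.succ_injective h
  · intro d hd
    have hd' := (Finset.mem_filter.1 hd).1
    have h1 := Nat.pos_of_mem_divisors hd'
    have h2 := Nat.divisor_le hd'
    refine ⟨d - 1, ?_, by simp only; omega⟩
    rw [Finset.mem_coe, Finset.mem_filter, Nat.sub_add_cancel h1]
    exact ⟨hs (Finset.mem_range.2 (by omega)), hd⟩

theorem coeff_sum_partSeries {m n : ℕ} (hn : n ≤ m) {s : Finset ℕ} (hs : Finset.range m ⊆ s) :
    (∑ i ∈ s, partSeries (i + 1)).coeff n = ((biregDivisors n).card : ℤ) := by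
  rw [map_sum]
  simp only [partSeries, PowerSeries.coeff_mk]
  rw [sum_ite_mem_biregDivisors hn hs (fun _ => 1)]
  simp

theorem coeff_sum_partSeries_sq {m : ℕ} {s : Finset ℕ} (hs : Finset.range m ⊆ s) :
    ((∑ i ∈ s, partSeries (i + 1)) ^ 2).coeff m = ((∑ p ∈ Finset.HasAntidiagonal.antidiagonal m,
      (biregDivisors p.1).card * (biregDivisors p.2).card : ℕ) : ℤ) := by
  rw [sq, PowerSeries.coeff_mul]
  push_cast
  refine Finset.sum_congr rfl fun p hp => ?_
  have := Finset.HasAntidiagonal.mem_antidiagonal.1 hp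
  rw [coeff_sum_partSeries (by omega) hs, coeff_sum_partSeries (by omega) hs]

theorem coeff_partSeries_sq {m : ℕ} (hm : m ≠ 0) (i : ℕ) :
    (partSeries i ^ 2).coeff m =
      if i ∈ biregDivisors m then ((m / i : ℕ) : ℤ) - 1 else 0 := by
  rw [sq, PowerSeries.coeff_mul]
  simp only [partSeries, PowerSeries.coeff_mk, ← ite_and, ite_mul, one_mul, zero_mul,
    biregDivisors, Finset.mem_filter, Nat.mem_divisors]
  rw [Finset.sum_boole]
  split_ifs with h
  · obtain ⟨⟨⟨k, rfl⟩, h0⟩, h29⟩ := h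
    have hi : 0 < i := Nat.pos_of_ne_zero (left_ne_zero_of_mul h0)
    have hk : 0 < k := Nat.pos_of_ne_zero (right_ne_zero_of_mul h0)
    rw [Nat.mul_div_cancel_left _ hi]
    suffices h : Finset.card _ = (Finset.Ico 1 k).card by
      rw [h, Nat.card_Ico, Nat.cast_sub hk, Nat.cast_one]
    symm
    refine Finset.card_bij (fun a _ => (i * a, i * (k - a))) ?_ ?_ ?_
    · intro a ha
      rw [Finset.mem_Ico] at ha
      simp only [Finset.mem_filter, Finset.HasAntidiagonal.mem_antidiagonal]
      refine ⟨by rw [← mul_add, Nat.add_sub_cancel' ha.2.le], ?_⟩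
      have h1 : i * a ≠ 0 := Nat.mul_ne_zero (by omega) (by omega)
      have h2 : i * (k - a) ≠ 0 := Nat.mul_ne_zero (by omega) (by omega)
      exact ⟨⟨⟨dvd_mul_right _ _, h1⟩, h29⟩, ⟨dvd_mul_right _ _, h2⟩, h29⟩
    · intro a _ b _ h
      exact Nat.eq_of_mul_eq_mul_left hi (Prod.mk.inj h).1
    · rintro ⟨a, b⟩ h
      simp only [Finset.mem_filter, Finset.HasAntidiagonal.mem_antidiagonal] at h
      obtain ⟨hab, ⟨⟨⟨x, rfl⟩, hx⟩, -⟩, ⟨⟨y, rfl⟩, hy⟩, -⟩ := h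
      rw [← mul_add] at hab
      have hxy := Nat.eq_of_mul_eq_mul_left hi hab
      have hx' := Nat.pos_of_ne_zero (right_ne_zero_of_mul hx)
      have hy' := Nat.pos_of_ne_zero (right_ne_zero_of_mul hy)
      refine ⟨x, Finset.mem_Ico.2 ⟨hx', by omega⟩, ?_⟩
      rw [← hxy, Nat.add_sub_cancel_left]
  · rw [Nat.cast_eq_zero, Finset.card_eq_zero, Finset.filter_eq_empty_iff]
    rintro ⟨a, b⟩ hab ⟨⟨⟨ha, -⟩, h29⟩, ⟨hb, -⟩, -⟩
    rw [Finset.HasAntidiagonal.mem_antidiagonal] at hab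
    exact h ⟨⟨hab ▸ dvd_add ha hb, hm⟩, h29⟩

theorem eight_dvd_biregOverpartitions_sub (m : ℕ) (hm : m ≠ 0) :
    (8 : ℤ) ∣ biregOverpartitions 2 9 m - 2 * (∑ d ∈ biregDivisors m, (2 - ((m / d : ℕ) : ℤ)) +
      ((∑ p ∈ Finset.HasAntidiagonal.antidiagonal m,
        (biregDivisors p.1).card * (biregDivisors p.2).card : ℕ) : ℤ)) := by
  obtain ⟨s, hs, hB⟩ := exists_natCast_biregOverpartitions_eq_coeff_prod m
  obtain ⟨E, Q, hprod, hsq⟩ := exists_prod_one_add_two_mul s fun i => partSeries (i + 1)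
  have h1 := coeff_sum_partSeries le_rfl hs
  have h2 := congrArg (PowerSeries.coeff m) hsq
  have h3 : (∑ i ∈ s, partSeries (i + 1) ^ 2).coeff m =
      ∑ d ∈ biregDivisors m, (((m / d : ℕ) : ℤ) - 1) := by
    rw [map_sum]
    simp only [coeff_partSeries_sq hm]
    exact sum_ite_mem_biregDivisors le_rfl hs fun d => ((m / d : ℕ) : ℤ) - 1
  have hC : ∀ (k : ℤ) (f : PowerSeries ℤ), (PowerSeries.C k * f).coeff m = k * f.coeff m :=
    fun k f => PowerSeries.coeff_C_mul m f k
  rw [show (2 : PowerSeries ℤ) = PowerSeries.C 2 by simp, map_add, hC,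
    coeff_sum_partSeries_sq hs, h3] at h2
  rw [hprod, show (2 : PowerSeries ℤ) = PowerSeries.C 2 by simp,
    show (4 : PowerSeries ℤ) = PowerSeries.C 4 by simp,
    show (8 : PowerSeries ℤ) = PowerSeries.C 8 by simp, map_add, map_add, map_add, hC, hC, hC,
    h1, PowerSeries.coeff_one, if_neg hm] at hB
  have h4 : ∑ d ∈ biregDivisors m, (2 - ((m / d : ℕ) : ℤ)) =
      (biregDivisors m).card - ∑ d ∈ biregDivisors m, (((m / d : ℕ) : ℤ) - 1) := by
    rw [Finset.cast_card, ← Finset.sum_sub_distrib]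
    exact Finset.sum_congr rfl fun _ _ => by ring
  rw [hB, h4, h2]
  exact ⟨Q.coeff m, by ring⟩

theorem B29_mod8_6n5 (n : ℕ) : 8 ∣ biregOverpartitions 2 9 (6 * n + 5) := by
  obtain ⟨m, hm⟩ : ∃ m, m = 6 * n + 5 := ⟨_, rfl⟩
  rw [← hm]
  have hsq : ¬ IsSquare m := by
    rintro ⟨x, hx⟩
    have h1 := Nat.mul_mod x x 3
    have h2 : x % 3 < 3 := Nat.mod_lt _ (by norm_num)
    interval_cases x % 3 <;> omega
  have hdiv : biregDivisors m = m.divisors := by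
    refine Finset.filter_true_of_mem fun d hd => ?_
    have hd := Nat.dvd_of_mem_divisors hd
    refine ⟨fun h => ?_, fun h => ?_⟩ <;> have := h.trans hd <;> omega
  have h := eight_dvd_biregOverpartitions_sub m (by omega)
  have h4 := four_dvd_sum_divisors_add (by omega : m % 2 = 1) hsq
  have hC := sum_card_biregDivisors_modEq (by omega : m % 6 = 5)
  rw [hdiv, Nat.sum_div_divisors m fun d => (2 - (d : ℤ)),
    sum_antidiagonal_eq_two_mul (by omega) fun a => (biregDivisors a).card] at h
  unfold Nat.ModEq at hC
  omega
end

section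
/- Let k ≥ 0 and n ≥ 0 be integers, and let p₁, p₂, …, p_{k+1} be primes such that pᵢ ≥ 5 and pᵢ ≢ 1 (mod 6) for each 1 ≤ i ≤ k+1. Then for every positive integer j with j ≢ 0 (mod p_{k+1}), we have B̄_{2,9}( 6·p₁²p₂²⋯p_{k+1}²·n + (6j + p_{k+1})·p₁²p₂²⋯p_k²·p_{k+1} ) ≡ 0 (mod 8). -/
open Finset PowerSeries
open scoped PowerSeries.WithPiTopology ArithmeticFunction.sigma

/-- A finite set with a fixed-point-free involution has even cardinality. -/
theorem even_card_of_fixedPointFree_involution {α : Type*} (s : Finset α) (g : α → α)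
    (hne : ∀ a ∈ s, g a ≠ a) (hmem : ∀ a ∈ s, g a ∈ s) (hinv : ∀ a ∈ s, g (g a) = a) :
    Even s.card := by
  have h : ∑ _x ∈ s, (1 : ZMod 2) = 0 :=
    Finset.sum_involution (fun a _ => g a) (fun _ _ => by decide) (fun a ha _ => hne a ha)
      hmem hinv
  rw [Finset.sum_const, nsmul_one, ZMod.natCast_eq_zero_iff] at h
  exact even_iff_two_dvd.2 h

theorem even_card_divisors_of_not_isSquare {n : ℕ} (hn : ¬ IsSquare n) :
    Even n.divisors.card := by
  refine even_card_of_fixedPointFree_involution _ (fun d => n / d) ?_ ?_ ?_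
  · intro d hd h
    have := Nat.mul_div_cancel' (Nat.dvd_of_mem_divisors hd)
    rw [h] at this
    exact hn ⟨d, this.symm⟩
  · intro d hd
    rw [Nat.mem_divisors] at hd ⊢
    exact ⟨Nat.div_dvd_of_dvd hd.1, hd.2⟩
  · intro d hd
    rw [Nat.mem_divisors] at hd
    exact Nat.div_div_self hd.1 hd.2

theorem even_sigma_one_iff_even_card_divisors {n : ℕ} (hodd : Odd n) :
    Even (σ 1 n) ↔ Even n.divisors.card := by
  rw [ArithmeticFunction.sigma_one_apply, Finset.even_sum_iff_even_card_odd,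
    Finset.filter_true_of_mem]
  exact fun d hd => hodd.of_dvd_nat (Nat.dvd_of_mem_divisors hd)

theorem even_sigma_one_of_odd_of_not_isSquare {n : ℕ} (hodd : Odd n) (hn : ¬ IsSquare n) :
    Even (σ 1 n) :=
  (even_sigma_one_iff_even_card_divisors hodd).2 (even_card_divisors_of_not_isSquare hn)

theorem IsSquare.mod_three_ne_two {n : ℕ} (h : IsSquare n) : n % 3 ≠ 2 := by
  obtain ⟨r, rfl⟩ := h
  have : r % 3 < 3 := Nat.mod_lt _ (by norm_num)
  rw [Nat.mul_mod]
  interval_cases r % 3 <;> simp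

theorem pow_mod_three_eq_two {p e : ℕ} (hp : p % 3 = 2) (he : Odd e) :
    (p ^ e) % 3 = 2 := by
  obtain ⟨k, rfl⟩ := he
  rw [pow_succ, pow_mul, Nat.mul_mod, Nat.pow_mod, Nat.pow_mod p, hp]
  norm_num [Nat.pow_mod]

/-- If `p ≡ 2 (mod 3)` and `e` is odd, then both coprime factors of `p ^ e * M ≡ 1 (mod 6)` are
`≡ 2 (mod 3)`, hence not squares, hence have an even divisor sum. -/
theorem four_dvd_sigma_one {p e M : ℕ} (hp3 : p % 3 = 2) (he : Odd e)
    (hM : p.Coprime M) (hN : (p ^ e * M) % 6 = 1) : 4 ∣ σ 1 (p ^ e * M) := by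
  have hpe := pow_mod_three_eq_two hp3 he
  have hodd : Odd (p ^ e * M) := Nat.odd_iff.2 (by omega)
  rw [Nat.odd_mul] at hodd
  have hM3 : M % 3 = 2 := by
    have h1 : (p ^ e * M) % 3 = 1 := by omega
    rw [Nat.mul_mod, hpe] at h1
    omega
  rw [ArithmeticFunction.isMultiplicative_sigma.map_mul_of_coprime (hM.pow_left e)]
  exact mul_dvd_mul
    (even_iff_two_dvd.1 <| even_sigma_one_of_odd_of_not_isSquare hodd.1
      fun h => h.mod_three_ne_two hpe)
    (even_iff_two_dvd.1 <| even_sigma_one_of_odd_of_not_isSquare hodd.2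
      fun h => h.mod_three_ne_two hM3)

/-- The admissible part sizes dividing `n`. -/
def admissibleDivisors (n : ℕ) : Finset ℕ :=
  n.divisors.filter fun a => ¬ 2 ∣ a ∧ ¬ 9 ∣ a

theorem even_card_admissibleDivisors_of_three_dvd {n : ℕ} (hn : 3 ∣ n) :
    Even (admissibleDivisors n).card := by
  obtain ⟨m, rfl⟩ := hn
  refine even_card_of_fixedPointFree_involution _ (fun a => if 3 ∣ a then a / 3 else 3 * a)
    ?_ ?_ ?_
  · intro a ha
    have : 0 < a := Nat.pos_of_mem_divisors (Finset.mem_filter.1 ha).1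
    split_ifs <;> omega
  · intro a ha
    simp only [admissibleDivisors, Finset.mem_filter, Nat.mem_divisors] at ha ⊢
    obtain ⟨⟨hd, h0⟩, h2, h9⟩ := ha
    split_ifs with h3
    · obtain ⟨b, rfl⟩ := h3
      rw [Nat.mul_div_cancel_left _ (by norm_num)]
      exact ⟨⟨(Dvd.intro_left 3 rfl).trans hd, h0⟩, by omega, by omega⟩
    · refine ⟨⟨?_, h0⟩, by omega, by omega⟩
      exact mul_dvd_mul_left 3
        ((((Nat.prime_three.coprime_iff_not_dvd).2 h3).symm).dvd_of_dvd_mul_left hd)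
  · intro a ha
    simp only [admissibleDivisors, Finset.mem_filter, Nat.mem_divisors] at ha
    split_ifs <;> omega

theorem admissibleDivisors_of_odd {n : ℕ} (hodd : Odd n) (h3 : ¬ 3 ∣ n) :
    admissibleDivisors n = n.divisors := by
  refine Finset.filter_true_of_mem fun a ha => ?_
  have ha := Nat.dvd_of_mem_divisors ha
  rw [Nat.odd_iff] at hodd
  refine ⟨fun h => ?_, fun h => ?_⟩
  · have := h.trans ha
    omega
  · have := h.trans ha
    omega

/-- Among the numbers `≡ 2 (mod 3)`, only even ones have an odd number of admissible divisors. -/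
theorem even_card_admissibleDivisors_of_odd {n : ℕ} (hodd : Odd n) (hn : n % 3 = 2) :
    Even (admissibleDivisors n).card := by
  rw [admissibleDivisors_of_odd hodd (by omega)]
  exact even_card_divisors_of_not_isSquare fun h => h.mod_three_ne_two hn

theorem even_card_admissibleDivisors_mul {i j : ℕ} (h : (i + j) % 6 = 1) :
    Even ((admissibleDivisors i).card * (admissibleDivisors j).card) := by
  rw [Nat.even_mul]
  by_cases hi : 3 ∣ i
  · exact Or.inl (even_card_admissibleDivisors_of_three_dvd hi)
  by_cases hj : 3 ∣ j
  · exact Or.inr (even_card_admissibleDivisors_of_three_dvd hj)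
  rcases Nat.even_or_odd i with he | ho
  · rw [Nat.even_iff] at he
    exact Or.inr (even_card_admissibleDivisors_of_odd (Nat.odd_iff.2 (by omega)) (by omega))
  · exact Or.inl (even_card_admissibleDivisors_of_odd ho (by omega))

theorem four_dvd_sum_antidiagonal {n : ℕ} (hn : Odd n) (f : ℕ → ℕ)
    (hf : ∀ i j, i + j = n → Even (f i * f j)) :
    4 ∣ ∑ ij ∈ antidiagonal n, f ij.1 * f ij.2 := by
  have h : ∑ ij ∈ antidiagonal n, ((f ij.1 * f ij.2 : ℕ) : ZMod 4) = 0 := by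
    refine Finset.sum_involution (fun ij _ => ij.swap) ?_ ?_ ?_ ?_
    · rintro ⟨i, j⟩ hij
      obtain ⟨c, hc⟩ := hf i j (HasAntidiagonal.mem_antidiagonal.1 hij)
      simp only [Prod.fst_swap, Prod.snd_swap]
      rw [mul_comm (f j), ← Nat.cast_add, ZMod.natCast_eq_zero_iff]
      omega
    · rintro ⟨i, j⟩ hij - h
      rw [HasAntidiagonal.mem_antidiagonal] at hij
      simp only [Prod.swap_prod_mk, Prod.mk.injEq] at h hij
      rw [Nat.odd_iff] at hn
      omega
    · rintro ⟨i, j⟩ hij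
      simpa [add_comm] using hij
    · exact fun _ _ => Prod.swap_swap _
  rw [← Nat.cast_sum, ZMod.natCast_eq_zero_iff] at h
  exact h

/-- Modulo `8`, a product of factors `1 + 2x` is determined by the first two elementary symmetric
functions of the `x`. -/
theorem prod_one_add_two_mul_eq {R ι : Type*} [CommRing R] (s : Finset ι) (x : ι → R) :
    ∃ e r : R, (∑ i ∈ s, x i) ^ 2 - ∑ i ∈ s, x i ^ 2 = 2 * e ∧
      ∏ i ∈ s, (1 + 2 * x i) = 1 + 2 * ∑ i ∈ s, x i + 4 * e + 8 * r := by
  classical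
  induction s using Finset.induction_on with
  | empty => exact ⟨0, 0, by simp, by simp⟩
  | insert a s ha ih =>
    obtain ⟨e, r, h1, h2⟩ := ih
    refine ⟨e + x a * ∑ i ∈ s, x i, r + e * x a + 2 * r * x a, ?_, ?_⟩
    · rw [Finset.sum_insert ha, Finset.sum_insert ha]
      linear_combination h1
    · rw [Finset.sum_insert ha, Finset.prod_insert ha, h2]
      ring

/-- The generating function of the positive multiples of `a` if `a` is admissible, else `0`. -/
noncomputable def multiplesSeries (a : ℕ) : ℤ⟦X⟧ :=
  PowerSeries.mk fun n => if a ∈ admissibleDivisors n then 1 else 0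

theorem sum_ite_mem_admissibleDivisors {s : Finset ℕ} {n N : ℕ} (hs : range N ⊆ s) (hn : n ≤ N)
    (g : ℕ → ℤ) :
    ∑ i ∈ s, (if i + 1 ∈ admissibleDivisors n then g (i + 1) else 0) =
      ∑ a ∈ admissibleDivisors n, g a := by
  rw [← Finset.sum_filter]
  refine Finset.sum_bij (fun i _ => i + 1) ?_ ?_ ?_ ?_
  · exact fun i hi => (Finset.mem_filter.1 hi).2
  · intro i _ j _ h
    omega
  · intro a ha
    have hd := (Finset.mem_filter.1 ha).1
    have h1 := Nat.pos_of_mem_divisors hd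
    have h2 := Nat.divisor_le hd
    refine ⟨a - 1, ?_, by omega⟩
    rw [Finset.mem_filter, Nat.sub_add_cancel h1]
    exact ⟨hs (Finset.mem_range.2 (by omega)), ha⟩
  · exact fun _ _ => rfl

theorem coeff_sum_multiplesSeries {s : Finset ℕ} {n N : ℕ} (hs : range N ⊆ s) (hn : n ≤ N) :
    coeff n (∑ i ∈ s, multiplesSeries (i + 1)) = ((admissibleDivisors n).card : ℤ) := by
  simp only [map_sum, multiplesSeries, coeff_mk]
  rw [sum_ite_mem_admissibleDivisors hs hn fun _ => 1]
  simp

theorem coeff_multiplesSeries_sq {a n : ℕ} (hn : n ≠ 0) :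
    coeff n (multiplesSeries a ^ 2) =
      if a ∈ admissibleDivisors n then ((n / a : ℕ) : ℤ) - 1 else 0 := by
  simp only [sq, coeff_mul, multiplesSeries, coeff_mk, ← ite_and, mul_ite, mul_one, mul_zero]
  rw [Finset.sum_boole]
  split_ifs with ha
  · simp only [admissibleDivisors, Finset.mem_filter, Nat.mem_divisors] at ha
    obtain ⟨⟨⟨m, rfl⟩, -⟩, hadm⟩ := ha
    have ha0 : 0 < a := Nat.pos_of_ne_zero (by rintro rfl; simp at hn)
    have hm0 : 0 < m := Nat.pos_of_ne_zero (by rintro rfl; simp at hn)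
    rw [Nat.mul_div_cancel_left _ ha0]
    have hcard : (Finset.Ioo 0 m).card = m - 1 := by simp
    rw [← Nat.cast_one, ← Nat.cast_sub hm0, ← hcard, Nat.cast_inj]
    symm
    refine Finset.card_bij (fun t _ => (a * t, a * (m - t))) ?_ ?_ ?_
    · intro t ht
      rw [Finset.mem_Ioo] at ht
      have h1 : m - t ≠ 0 := by omega
      simp only [admissibleDivisors, Finset.mem_filter, Nat.mem_divisors,
        HasAntidiagonal.mem_antidiagonal]
      refine ⟨?_, ⟨⟨dvd_mul_right _ _, ?_⟩, hadm⟩, ⟨⟨dvd_mul_right _ _, ?_⟩, hadm⟩⟩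
      · rw [← mul_add, Nat.add_sub_cancel' ht.2.le]
      · exact mul_ne_zero ha0.ne' h1
      · exact mul_ne_zero ha0.ne' ht.1.ne'
    · intro t _ u _ h
      exact Nat.eq_of_mul_eq_mul_left ha0 (Prod.mk.inj h).1
    · rintro ⟨i, j⟩ hij
      simp only [admissibleDivisors, Finset.mem_filter, Nat.mem_divisors,
        HasAntidiagonal.mem_antidiagonal] at hij
      obtain ⟨hsum, ⟨⟨⟨u, rfl⟩, hu⟩, -⟩, ⟨⟨⟨t, rfl⟩, ht⟩, -⟩⟩ := hij
      rw [← mul_add] at hsum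
      have hm := Nat.eq_of_mul_eq_mul_left ha0 hsum
      have ht0 := Nat.pos_of_ne_zero (right_ne_zero_of_mul ht)
      have hu0 := Nat.pos_of_ne_zero (right_ne_zero_of_mul hu)
      refine ⟨t, Finset.mem_Ioo.2 ⟨ht0, by omega⟩, ?_⟩
      rw [show m - t = u by omega]
  · rw [Nat.cast_eq_zero, Finset.card_eq_zero, Finset.filter_eq_empty_iff]
    rintro ⟨i, j⟩ hij ⟨hi, hj⟩
    rw [HasAntidiagonal.mem_antidiagonal] at hij
    simp only [admissibleDivisors, Finset.mem_filter, Nat.mem_divisors] at ha hi hj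
    exact ha ⟨⟨hij ▸ dvd_add (by tauto) (by tauto), hn⟩, hi.2⟩

/-- The weight of a part size in the count of `(2, 9)`-biregular overpartitions. -/
def partWeight (a _c : ℕ) : ℤ := if ¬ 2 ∣ a ∧ ¬ 9 ∣ a then 2 else 0

theorem coeff_genFun_partWeight (n : ℕ) :
    coeff n (Nat.Partition.genFun partWeight) = (biregOverpartitions 2 9 n : ℤ) := by
  rw [Nat.Partition.coeff_genFun, biregOverpartitions, Nat.cast_sum]
  refine Finset.sum_congr rfl fun p _ => ?_
  simp only [Finsupp.prod, Multiset.toFinsupp_support, partWeight]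
  split_ifs with h
  · rw [Finset.prod_congr rfl fun a ha => if_pos (h a (Multiset.mem_toFinset.1 ha))]
    simp
  · push Not at h
    obtain ⟨a, ha, hadm⟩ := h
    rw [Finset.prod_eq_zero (Multiset.mem_toFinset.2 ha) (if_neg fun h => h.2 (hadm h.1))]
    simp

theorem one_add_tsum_partWeight (i : ℕ) :
    (1 : ℤ⟦X⟧) + ∑' j, C (partWeight (i + 1) (j + 1)) * X ^ ((i + 1) * (j + 1)) =
      1 + 2 * multiplesSeries (i + 1) := by
  congr 1
  ext n
  have hsum := Nat.Partition.summable_genFun_term partWeight i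
  simp only [smul_eq_C_mul] at hsum
  rw [hsum.map_tsum _ (WithPiTopology.continuous_coeff ℤ n), two_mul, map_add,
    multiplesSeries, coeff_mk]
  simp only [coeff_C_mul, coeff_X_pow, mul_ite, mul_one, mul_zero, partWeight,
    admissibleDivisors, Finset.mem_filter, Nat.mem_divisors]
  by_cases hn : i + 1 ∣ n ∧ n ≠ 0
  · obtain ⟨⟨m, rfl⟩, hm⟩ := hn
    obtain ⟨m, rfl⟩ := Nat.exists_eq_succ_of_ne_zero (right_ne_zero_of_mul hm)
    rw [tsum_eq_single m]
    · split_ifs <;> simp_all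
    · intro b hb
      rw [if_neg]
      intro h
      have := Nat.eq_of_mul_eq_mul_left (Nat.succ_pos i) h
      omega
  · simp only [hn, false_and, if_false, add_zero]
    refine (tsum_congr fun b => ?_).trans tsum_zero
    rw [if_neg]
    rintro rfl
    exact hn ⟨dvd_mul_right _ _, by positivity⟩

theorem exists_coeff_prod_eq_biregOverpartitions (N : ℕ) :
    ∃ s : Finset ℕ, range N ⊆ s ∧
      coeff N (∏ i ∈ s, (1 + 2 * multiplesSeries (i + 1))) = (biregOverpartitions 2 9 N : ℤ) := by
  have h := Nat.Partition.hasProd_genFun partWeight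
  simp only [smul_eq_C_mul, one_add_tsum_partWeight] at h
  rw [HasProd, WithPiTopology.tendsto_iff_coeff_tendsto] at h
  have h := h N
  rw [nhds_discrete, Filter.tendsto_pure] at h
  obtain ⟨s, hs, hs'⟩ := ((Filter.eventually_ge_atTop (range N)).and h).exists
  exact ⟨s, hs, hs'.trans (coeff_genFun_partWeight N)⟩

theorem eight_dvd_biregOverpartitions {N : ℕ} (hN : N % 6 = 1) (hσ : 4 ∣ σ 1 N) :
    8 ∣ biregOverpartitions 2 9 N := by
  have hN0 : N ≠ 0 := by omega
  have hodd : Odd N := Nat.odd_iff.2 (by omega)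
  obtain ⟨s, hs, hcoeff⟩ := exists_coeff_prod_eq_biregOverpartitions N
  obtain ⟨e, r, he, hr⟩ := prod_one_add_two_mul_eq s fun i => multiplesSeries (i + 1)
  have hA := coeff_sum_multiplesSeries hs le_rfl
  have hA2 : (4 : ℤ) ∣ coeff N ((∑ i ∈ s, multiplesSeries (i + 1)) ^ 2) := by
    rw [sq, coeff_mul, Finset.sum_congr rfl fun ij hij => congrArg₂ (· * ·)
      (coeff_sum_multiplesSeries hs (by have := HasAntidiagonal.mem_antidiagonal.1 hij; omega))
      (coeff_sum_multiplesSeries hs (by have := HasAntidiagonal.mem_antidiagonal.1 hij; omega))]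
    exact_mod_cast four_dvd_sum_antidiagonal hodd
      (fun i => (admissibleDivisors i).card)
      fun i j hij => even_card_admissibleDivisors_mul (by omega)
  have hQ : coeff N (∑ i ∈ s, multiplesSeries (i + 1) ^ 2) =
      (σ 1 N : ℤ) - (N.divisors.card : ℤ) := by
    simp only [map_sum, coeff_multiplesSeries_sq hN0]
    rw [sum_ite_mem_admissibleDivisors hs le_rfl fun a => ((N / a : ℕ) : ℤ) - 1,
      admissibleDivisors_of_odd hodd (by omega), Finset.sum_sub_distrib,
      ArithmeticFunction.sigma_eq_sum_div]
    simp
  rw [admissibleDivisors_of_odd hodd (by omega)] at hA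
  obtain ⟨d, hd⟩ := (even_sigma_one_iff_even_card_divisors hodd).1
    (even_iff_two_dvd.2 ((by norm_num : 2 ∣ 4).trans hσ))
  have h2 := congrArg (coeff N) he
  have h8 := congrArg (coeff N) hr
  have hC (c : ℤ) (f : ℤ⟦X⟧) : coeff N (C c * f) = c * coeff N f := coeff_C_mul _ _ _
  rw [show (2 : ℤ⟦X⟧) = C 2 from rfl, map_sub, hQ, hC] at h2
  rw [hcoeff, show (2 : ℤ⟦X⟧) = C 2 from rfl, show (4 : ℤ⟦X⟧) = C 4 from rfl,
    show (8 : ℤ⟦X⟧) = C 8 from rfl, map_add, map_add, map_add, hC, hC, hC, hA, coeff_one,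
    if_neg hN0] at h8
  omega

theorem B29_inf_family_mod8 (k n : ℕ) (p : Fin (k + 2) → ℕ)
    (hp : ∀ i, (p i).Prime ∧ 5 ≤ p i ∧ p i % 6 ≠ 1)
    (j : ℕ) (hj : 0 < j) (hjp : ¬ p (Fin.last (k + 1)) ∣ j) :
    8 ∣ biregOverpartitions 2 9
      (6 * (∏ i, p i ^ 2) * n +
        (6 * j + p (Fin.last (k + 1))) * (∏ i : Fin (k + 1), p i.castSucc ^ 2) *
          p (Fin.last (k + 1))) := by
  have hmod : ∀ i, p i % 6 = 5 := by
    intro i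
    obtain ⟨hpr, h5, h1⟩ := hp i
    have h2 : ¬ 2 ∣ p i := fun h => by
      have := (Nat.prime_dvd_prime_iff_eq Nat.prime_two hpr).1 h
      omega
    have h3 : ¬ 3 ∣ p i := fun h => by
      have := (Nat.prime_dvd_prime_iff_eq Nat.prime_three hpr).1 h
      omega
    omega
  rw [Fin.prod_univ_castSucc]
  set q := p (Fin.last (k + 1)) with hq
  obtain ⟨hqp, hq5, -⟩ := hp (Fin.last (k + 1))
  rw [← hq] at hqp hq5
  have hq6 : q % 6 = 5 := hmod _
  rw [Finset.prod_pow]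
  have hP6 : (∏ i : Fin (k + 1), p i.castSucc) ^ 2 % 6 = 1 := by
    rw [← Finset.prod_pow, Finset.prod_nat_mod, Finset.prod_congr rfl fun i _ =>
      show p i.castSucc ^ 2 % 6 = 1 by rw [Nat.pow_mod, hmod]]
    simp
  set P := ∏ i : Fin (k + 1), p i.castSucc
  have hP0 : P ≠ 0 := by
    intro h
    rw [h] at hP6
    norm_num at hP6
  obtain ⟨t, m, hm, hPm⟩ := Nat.exists_eq_pow_mul_and_not_dvd hP0 q hqp.ne_one
  have hr6 : (q * (6 * (q * n + j) + q)) % 6 = 1 := by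
    rw [Nat.mul_mod, Nat.mul_add_mod, hq6]
  have hrq : ¬ q ∣ 6 * (q * n + j) + q := by
    rw [Nat.dvd_add_left dvd_rfl, hqp.dvd_mul, Nat.dvd_add_right (dvd_mul_right _ _)]
    rintro (h | h)
    · have := Nat.le_of_dvd (by norm_num) h
      have : q = 5 := by omega
      rw [this] at h
      norm_num at h
    · exact hjp h
  have hN : 6 * (P ^ 2 * q ^ 2) * n + (6 * j + q) * P ^ 2 * q =
      q ^ (2 * t + 1) * (m ^ 2 * (6 * (q * n + j) + q)) := by
    rw [hPm]
    ring
  have hN6 : (6 * (P ^ 2 * q ^ 2) * n + (6 * j + q) * P ^ 2 * q) % 6 = 1 := by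
    rw [show 6 * (P ^ 2 * q ^ 2) * n + (6 * j + q) * P ^ 2 * q =
      P ^ 2 * (q * (6 * (q * n + j) + q)) by ring, Nat.mul_mod, hP6, hr6]
  refine eight_dvd_biregOverpartitions hN6 ?_
  rw [hN] at hN6 ⊢
  refine four_dvd_sigma_one (by omega) ⟨t, rfl⟩ ?_ hN6
  exact Nat.Coprime.mul_right (((hqp.coprime_iff_not_dvd).2 hm).pow_right 2)
    ((hqp.coprime_iff_not_dvd).2 hrq)
end

section
/- For all integers n ≥ 0, B̄_{2,9}(12n+7) ≡ 0 (mod 8) and B̄_{2,9}(12n+1) ≡ 0 (mod 2). -/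
open Finset

/-- Factorizations `x = a * i` with `i` even and `a` odd and not divisible by `9`. -/
def evenMultFactors (x : ℕ) : Finset (ℕ × ℕ) :=
  x.divisorsAntidiagonal.filter fun y => ¬ 2 ∣ y.1 ∧ ¬ 9 ∣ y.1 ∧ 2 ∣ y.2

/-- Factorizations `v = b * j` with `b` odd and not divisible by `9`. -/
def oddPartFactors (v : ℕ) : Finset (ℕ × ℕ) :=
  v.divisorsAntidiagonal.filter fun y => ¬ 2 ∣ y.1 ∧ ¬ 9 ∣ y.1

/-- Representations `m = a * i + b * j` with `i` even and `a`, `b` odd and not divisible by `9`. -/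
def twoPartReps (m : ℕ) : Finset ((_ : ℕ × ℕ) × ((ℕ × ℕ) × (ℕ × ℕ))) :=
  (antidiagonal m).sigma fun xv => evenMultFactors xv.1 ×ˢ oddPartFactors xv.2

/-- A set of factorizations of a multiple of `3`, with left factors not divisible by `9`, has even
size if its defining condition is insensitive to moving a factor `3` from one side to the other. -/
lemma even_card_filter_divisorsAntidiagonal {x : ℕ} (hx : 3 ∣ x) (P : ℕ × ℕ → Prop)
    [DecidablePred P] (h9 : ∀ y, P y → ¬ 9 ∣ y.1)
    (hP : ∀ a b, ¬ 3 ∣ a → (P (a, 3 * b) ↔ P (3 * a, b))) :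
    Even (x.divisorsAntidiagonal.filter P).card := by
  rw [← ZMod.natCast_eq_zero_iff_even, card_eq_sum_ones, Nat.cast_sum]
  refine sum_involution
    (fun y _ => if 3 ∣ y.1 then (y.1 / 3, 3 * y.2) else (3 * y.1, y.2 / 3)) ?_ ?_ ?_ ?_
  · intros; decide
  · rintro ⟨a, b⟩ h - heq
    simp only [mem_filter, Nat.mem_divisorsAntidiagonal] at h
    obtain ⟨⟨hab, hx0⟩, -⟩ := h
    have : a ≠ 0 := by rintro rfl; simp at hab; omega
    split_ifs at heq <;> simp only [Prod.mk.injEq] at heq <;> omega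
  · rintro ⟨a, b⟩ h
    simp only [mem_filter, Nat.mem_divisorsAntidiagonal] at h ⊢
    obtain ⟨⟨hab, hx0⟩, hp⟩ := h
    have h9' := h9 _ hp
    by_cases h3 : 3 ∣ a
    · obtain ⟨c, rfl⟩ := h3
      have hc : ¬ 3 ∣ c := by simp only at h9'; omega
      simp only [dvd_mul_right, if_true, Nat.mul_div_cancel_left c (by norm_num : 0 < 3)]
      exact ⟨⟨by rw [← hab]; ring, hx0⟩, (hP _ _ hc).2 hp⟩
    · have hb : 3 ∣ b := (Nat.Prime.dvd_mul Nat.prime_three).1 (hab ▸ hx) |>.resolve_left h3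
      obtain ⟨c, rfl⟩ := hb
      simp only [h3, if_false, Nat.mul_div_cancel_left c (by norm_num : 0 < 3)]
      exact ⟨⟨by rw [← hab]; ring, hx0⟩, (hP _ _ h3).1 hp⟩
  · rintro ⟨a, b⟩ h
    simp only [mem_filter, Nat.mem_divisorsAntidiagonal] at h
    obtain ⟨⟨hab, hx0⟩, hp⟩ := h
    have h9' := h9 _ hp
    by_cases h3 : 3 ∣ a
    · have : ¬ 3 ∣ a / 3 := by simp only at h9'; omega
      simp only [h3, this, if_true, if_false, Prod.mk.injEq]
      omega
    · have hb : 3 ∣ b := (Nat.Prime.dvd_mul Nat.prime_three).1 (hab ▸ hx) |>.resolve_left h3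
      simp only [h3, dvd_mul_right, if_true, if_false, Prod.mk.injEq]
      omega

lemma even_card_evenMultFactors {x : ℕ} (hx : 3 ∣ x) : Even (evenMultFactors x).card :=
  even_card_filter_divisorsAntidiagonal hx _ (fun _ h => h.2.1)
    (fun a b _ => by simp only; omega)

lemma even_card_oddPartFactors {v : ℕ} (hv : 3 ∣ v) : Even (oddPartFactors v).card :=
  even_card_filter_divisorsAntidiagonal hv _ (fun _ h => h.2)
    (fun a b _ => by simp only; omega)

lemma even_card_oddPartFactors_of_not_isSquare {v : ℕ} (h2 : ¬ 2 ∣ v) (h3 : ¬ 3 ∣ v)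
    (hv : ¬ IsSquare v) : Even (oddPartFactors v).card := by
  have : oddPartFactors v = v.divisorsAntidiagonal := by
    refine filter_true_of_mem fun y hy => ?_
    rw [Nat.mem_divisorsAntidiagonal] at hy
    have hd : y.1 ∣ v := ⟨_, hy.1.symm⟩
    exact ⟨fun h => h2 (h.trans hd), fun h => h3 ((by norm_num : 3 ∣ 9).trans (h.trans hd))⟩
  rw [this, ← ZMod.natCast_eq_zero_iff_even, card_eq_sum_ones, Nat.cast_sum]
  refine sum_involution (fun y _ => y.swap) ?_ ?_ ?_ ?_
  · intros; decide
  · rintro ⟨a, b⟩ h - heq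
    simp only [Prod.swap_prod_mk, Prod.mk.injEq] at heq
    rw [Nat.mem_divisorsAntidiagonal] at h
    exact hv ⟨a, by rw [← h.1, heq.1]⟩
  · intro y hy
    simpa using hy
  · simp

/-- For `m ≡ 7 (mod 12)` the representations `m = a * i + b * j` pair up. -/
lemma even_card_twoPartReps {m : ℕ} (hm : m % 12 = 7) : Even (twoPartReps m).card := by
  rw [twoPartReps, card_sigma]
  refine even_sum _ fun xv hxv => ?_
  obtain ⟨x, v⟩ := xv
  rw [HasAntidiagonal.mem_antidiagonal] at hxv
  simp only at hxv ⊢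
  rw [card_product, Nat.even_mul]
  by_cases hx2 : 2 ∣ x
  · by_cases h3 : 3 ∣ v
    · exact Or.inr (even_card_oddPartFactors h3)
    by_cases hs : IsSquare v
    · left
      apply even_card_evenMultFactors
      obtain ⟨s, rfl⟩ := hs
      have h1 : s * s % 3 = 1 := by
        have : s % 3 = 0 ∨ s % 3 = 1 ∨ s % 3 = 2 := by omega
        rcases this with h | h | h <;> simp [Nat.mul_mod, h]
        exact h3 (Dvd.dvd.mul_right (Nat.dvd_of_mod_eq_zero h) _)
      omega
    · exact Or.inr (even_card_oddPartFactors_of_not_isSquare (by omega) h3 hs)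
  · left
    rw [evenMultFactors, filter_false_of_mem]
    · simp
    · rintro ⟨a, i⟩ h ⟨-, -, hi⟩
      rw [Nat.mem_divisorsAntidiagonal] at h
      exact hx2 (h.1 ▸ Dvd.dvd.mul_left hi a)

lemma four_dvd_sum_divisors {m : ℕ} (hm : m % 4 = 3) : 4 ∣ ∑ e ∈ m.divisors, e := by
  rw [← ZMod.natCast_eq_zero_iff, Nat.cast_sum]
  have key : ∀ e ∈ m.divisors, (e : ZMod 4) + (m / e : ℕ) = 0 ∧ m / e ≠ e := by
    intro e he
    obtain ⟨f, rfl⟩ := Nat.dvd_of_mem_divisors he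
    have he0 : 0 < e := Nat.pos_of_mem_divisors he
    rw [Nat.mul_div_cancel_left _ he0]
    have h := (ZMod.natCast_eq_natCast_iff' (e * f) 3 4).2 hm
    push_cast at h
    have aux : ∀ x y : ZMod 4, x * y = 3 → x + y = 0 ∧ y ≠ x := by decide
    have := aux _ _ h
    exact ⟨this.1, fun h => this.2 (by rw [h])⟩
  refine sum_involution (fun e _ => m / e) (fun e he => (key e he).1)
    (fun e he _ => (key e he).2) ?_ ?_
  · intro e he
    simp only [Nat.mem_divisors] at he ⊢
    exact ⟨Nat.div_dvd_of_dvd he.1, he.2⟩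
  · intro e he
    rw [Nat.mem_divisors] at he
    exact Nat.div_div_self he.1 he.2

lemma mem_twoPartReps {m x v a i b j : ℕ} :
    (⟨(x, v), (a, i), (b, j)⟩ : (_ : ℕ × ℕ) × ((ℕ × ℕ) × (ℕ × ℕ))) ∈ twoPartReps m ↔
      x + v = m ∧ ((a * i = x ∧ x ≠ 0) ∧ ¬ 2 ∣ a ∧ ¬ 9 ∣ a ∧ 2 ∣ i) ∧
        (b * j = v ∧ v ≠ 0) ∧ ¬ 2 ∣ b ∧ ¬ 9 ∣ b := by
  simp [twoPartReps, evenMultFactors, oddPartFactors]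

/-- Representations with equal parts `a = b` correspond to a divisor `e = i + j` of `m` together
with an even `i` in `(0, e)`. -/
lemma card_twoPartReps_eq {m : ℕ} (h2 : ¬ 2 ∣ m) (h3 : ¬ 3 ∣ m) :
    ((twoPartReps m).filter fun r => r.2.1.1 = r.2.2.1).card = ∑ e ∈ m.divisors, (e - 1) / 2 := by
  have : ∑ e ∈ m.divisors, (e - 1) / 2 =
      (m.divisors.sigma fun e => range ((e - 1) / 2)).card := by simp [card_sigma]
  rw [this]
  symm
  refine card_bij (fun r _ => ⟨(m / r.1 * (2 * (r.2 + 1)), m / r.1 * (r.1 - 2 * (r.2 + 1))),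
    (m / r.1, 2 * (r.2 + 1)), (m / r.1, r.1 - 2 * (r.2 + 1))⟩) ?_ ?_ ?_
  · rintro ⟨e, k⟩ h
    simp only [mem_sigma, Nat.mem_divisors, mem_range] at h
    obtain ⟨⟨⟨f, rfl⟩, h0⟩, hk⟩ := h
    obtain ⟨he, hf⟩ := mul_ne_zero_iff.1 h0
    simp only [mem_filter, and_true, mem_twoPartReps, Nat.mul_div_cancel_left f (by omega : 0 < e)]
    refine ⟨?_, ⟨⟨trivial, by positivity⟩, fun h => h2 (h.mul_left e), fun h => h3 ?_, by simp⟩,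
      ⟨trivial, mul_ne_zero hf (by omega)⟩, fun h => h2 (h.mul_left e), fun h => h3 ?_⟩
    · rw [← mul_add, mul_comm e]; congr 1; omega
    · exact ((by norm_num : 3 ∣ 9).trans h).mul_left e
    · exact ((by norm_num : 3 ∣ 9).trans h).mul_left e
  · rintro ⟨e, k⟩ h ⟨e', k'⟩ h' heq
    simp only [mem_sigma, Nat.mem_divisors, mem_range] at h h'
    simp only [Sigma.mk.injEq, Prod.mk.injEq, heq_eq_eq] at heq
    obtain ⟨-, ⟨-, hi⟩, -, hj⟩ := heq
    obtain rfl : k = k' := by omega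
    obtain rfl : e = e' := by omega
    rfl
  · rintro ⟨⟨x, v⟩, ⟨a, i⟩, ⟨b, j⟩⟩ h
    simp only [mem_filter, mem_twoPartReps] at h
    obtain ⟨⟨rfl, ⟨⟨rfl, hx⟩, ha, -, hi⟩, ⟨rfl, hv⟩, -, -⟩, rfl⟩ := h
    obtain ⟨k, rfl⟩ := hi
    have hk : k ≠ 0 := by rintro rfl; simp at hx
    have hj : j ≠ 0 := by rintro rfl; simp at hv
    have ha0 : a ≠ 0 := by rintro rfl; simp at hx
    have hj2 : ¬ 2 ∣ j := fun h => h2 ((Nat.dvd_add_right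
      (Dvd.intro_left (a * k) (by ring))).2 (h.mul_left a))
    have hdiv : (a * (2 * k) + a * j) / (2 * k + j) = a := by
      rw [← mul_add]; exact Nat.mul_div_cancel _ (by omega)
    refine ⟨⟨2 * k + j, k - 1⟩, ?_, ?_⟩
    · simp only [mem_sigma, Nat.mem_divisors, mem_range]
      exact ⟨⟨⟨a, by ring⟩, by omega⟩, by omega⟩
    · simp only [hdiv]
      obtain ⟨k, rfl⟩ := Nat.exists_eq_succ_of_ne_zero hk
      simp

/-- Admissible partitions of `m` with `c` distinct part sizes. -/
def admissiblePartitions (m c : ℕ) : Finset m.Partition :=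
  univ.filter fun p => (∀ x ∈ p.parts, ¬ 2 ∣ x ∧ ¬ 9 ∣ x) ∧ p.parts.toFinset.card = c

lemma biregOverpartitions_modEq {m : ℕ} (hm : m ≠ 0) :
    biregOverpartitions 2 9 m ≡
      2 * (admissiblePartitions m 1).card + 4 * (admissiblePartitions m 2).card [MOD 8] := by
  rw [← ZMod.natCast_eq_natCast_iff]
  simp only [biregOverpartitions, admissiblePartitions, card_filter]
  push_cast
  rw [mul_sum, mul_sum, ← sum_add_distrib]
  refine sum_congr rfl fun p _ => ?_
  by_cases hp : ∀ x ∈ p.parts, ¬ 2 ∣ x ∧ ¬ 9 ∣ x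
  · simp only [if_pos hp, and_iff_right hp]
    have h0 : p.parts.toFinset.card ≠ 0 := by
      intro h
      rw [card_eq_zero, Multiset.toFinset_eq_empty] at h
      exact hm (by rw [← p.parts_sum, h]; rfl)
    generalize p.parts.toFinset.card = c at h0
    match c, h0 with
    | 1, _ => simp
    | 2, _ => simp; decide
    | c + 3, _ =>
      have : (2 : ZMod 8) ^ (c + 3) = 0 := by
        rw [pow_add, show (2 : ZMod 8) ^ 3 = 0 by decide, mul_zero]
      simp [this]
  · rw [if_neg hp, if_neg fun h => hp h.1, if_neg fun h => hp h.1]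
    simp

lemma two_dvd_biregOverpartitions {m : ℕ} (hm : m ≠ 0) : 2 ∣ biregOverpartitions 2 9 m := by
  have := biregOverpartitions_modEq hm
  unfold Nat.ModEq at this
  omega

lemma card_admissiblePartitions_one {m : ℕ} (h2 : ¬ 2 ∣ m) (h3 : ¬ 3 ∣ m) :
    (admissiblePartitions m 1).card = m.divisors.card := by
  have hm : m ≠ 0 := by rintro rfl; simp at h2
  symm
  rw [← card_map ⟨Nat.Partition.parts, fun p q h => Nat.Partition.ext h⟩]
  refine card_bij (fun d _ => Multiset.replicate (m / d) d) ?_ ?_ ?_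
  · intro d hd
    obtain ⟨f, rfl⟩ := Nat.dvd_of_mem_divisors hd
    obtain ⟨hd0, hf0⟩ := mul_ne_zero_iff.1 hm
    rw [Nat.mul_div_cancel_left _ (Nat.pos_of_ne_zero hd0)]
    refine mem_map.2 ⟨⟨Multiset.replicate f d, ?_, ?_⟩, ?_, rfl⟩
    · intro i hi
      rw [Multiset.eq_of_mem_replicate hi]; omega
    · simp [mul_comm]
    · simp only [admissiblePartitions, mem_filter, mem_univ, true_and]
      refine ⟨fun x hx => ?_, ?_⟩
      · rw [Multiset.eq_of_mem_replicate hx]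
        exact ⟨fun h => h2 (h.mul_right f),
          fun h => h3 (((by norm_num : 3 ∣ 9).trans h).mul_right f)⟩
      · simp [Multiset.toFinset_replicate, hf0]
  · intro d hd d' hd' h
    rw [Nat.mem_divisors] at hd
    have : d ∈ Multiset.replicate (m / d) d :=
      Multiset.mem_replicate.2 ⟨(Nat.div_ne_zero_iff_of_dvd hd.1).2
        ⟨hm, ne_zero_of_dvd_ne_zero hm hd.1⟩, rfl⟩
    rw [h] at this
    exact Multiset.eq_of_mem_replicate this
  · intro s hs
    obtain ⟨p, hp, rfl⟩ := mem_map.1 hs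
    simp only [admissiblePartitions, mem_filter, mem_univ, true_and] at hp
    obtain ⟨d, hd⟩ := card_eq_one.1 hp.2
    have hrep : p.parts = Multiset.replicate (Multiset.card p.parts) d :=
      Multiset.eq_replicate.2 ⟨rfl, fun b hb => by
        simpa [hd] using (Multiset.mem_toFinset.2 hb : b ∈ p.parts.toFinset)⟩
    have hsum : Multiset.card p.parts * d = m := by
      have := p.parts_sum
      rw [hrep] at this
      simpa using this
    have hd0 : d ≠ 0 := by rintro rfl; omega
    refine ⟨d, Nat.mem_divisors.2 ⟨Dvd.intro_left _ hsum, hm⟩, ?_⟩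
    change _ = p.parts
    rw [show m / d = Multiset.card p.parts from
      Nat.div_eq_of_eq_mul_left (Nat.pos_of_ne_zero hd0) hsum.symm, ← hrep]

/-- In a partition of an odd number into two odd part sizes exactly one multiplicity is even, so
these partitions correspond to representations with `a ≠ b`. -/
lemma card_admissiblePartitions_two {m : ℕ} (h2 : ¬ 2 ∣ m) :
    (admissiblePartitions m 2).card =
      ((twoPartReps m).filter fun r => ¬ r.2.1.1 = r.2.2.1).card := by
  symm
  rw [← card_map ⟨Nat.Partition.parts, fun p q h => Nat.Partition.ext h⟩]
  refine card_bij (fun r _ => Multiset.replicate r.2.1.2 r.2.1.1 +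
    Multiset.replicate r.2.2.2 r.2.2.1) ?_ ?_ ?_
  · rintro ⟨⟨x, v⟩, ⟨a, i⟩, ⟨b, j⟩⟩ h
    simp only [mem_filter, mem_twoPartReps] at h
    obtain ⟨⟨hm, ⟨⟨rfl, hx⟩, ha2, ha9, hi⟩, ⟨rfl, hv⟩, hb2, hb9⟩, hab⟩ := h
    obtain ⟨ha0, hi0⟩ := mul_ne_zero_iff.1 hx
    obtain ⟨hb0, hj0⟩ := mul_ne_zero_iff.1 hv
    have hmem : ∀ y ∈ Multiset.replicate i a + Multiset.replicate j b, y = a ∨ y = b := by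
      intro y hy
      rw [Multiset.mem_add] at hy
      exact hy.imp Multiset.eq_of_mem_replicate Multiset.eq_of_mem_replicate
    refine mem_map.2
      ⟨⟨Multiset.replicate i a + Multiset.replicate j b, ?_, ?_⟩, ?_, rfl⟩
    · intro y hy
      rcases hmem y hy with rfl | rfl <;> omega
    · simpa [mul_comm] using hm
    · simp only [admissiblePartitions, mem_filter, mem_univ, true_and]
      refine ⟨fun y hy => ?_, ?_⟩
      · rcases hmem y hy with rfl | rfl
        exacts [⟨ha2, ha9⟩, ⟨hb2, hb9⟩]
      · rw [Multiset.toFinset_add, Multiset.toFinset_replicate, Multiset.toFinset_replicate,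
          if_neg hi0, if_neg hj0]
        exact card_pair hab
  · rintro ⟨⟨x, v⟩, ⟨a, i⟩, ⟨b, j⟩⟩ h ⟨⟨x', v'⟩, ⟨a', i'⟩, ⟨b', j'⟩⟩ h' heq
    simp only [mem_filter, mem_twoPartReps] at h h'
    obtain ⟨⟨hm, ⟨⟨rfl, hx⟩, ha2, -, hi⟩, ⟨rfl, hv⟩, hb2, -⟩, hab⟩ := h
    obtain ⟨⟨hm', ⟨⟨rfl, hx'⟩, ha2', -, hi'⟩, ⟨rfl, hv'⟩, hb2', -⟩, hab'⟩ := h'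
    have hj : ¬ 2 ∣ j := fun h => h2 (hm ▸ dvd_add (hi.mul_left a) (h.mul_left b))
    have hj' : ¬ 2 ∣ j' := fun h => h2 (hm' ▸ dvd_add (hi'.mul_left a') (h.mul_left b'))
    have hi0 := (mul_ne_zero_iff.1 hx).2
    have hcount : ∀ y, (if a = y then i else 0) + (if b = y then j else 0) =
        (if a' = y then i' else 0) + (if b' = y then j' else 0) := by
      intro y
      simpa [Multiset.count_replicate] using congrArg (Multiset.count y) heq
    have hA := hcount a
    have hB := hcount b
    simp only [if_true, hab, Ne.symm hab, if_false] at hA hB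
    have hbb : b' = b := by
      by_contra hne
      rw [if_neg hne] at hB
      split_ifs at hB <;> omega
    subst hbb
    have haa : a' = a := by
      by_contra hne
      rw [if_neg hne, if_neg (Ne.symm hab)] at hA
      omega
    subst haa
    simp [hab, Ne.symm hab] at hA hB
    subst hA hB
    rfl
  · intro s hs
    obtain ⟨p, hp, rfl⟩ := mem_map.1 hs
    simp only [admissiblePartitions, mem_filter, mem_univ, true_and] at hp
    obtain ⟨hadm, hcard⟩ := hp
    obtain ⟨a, b, hab, hset⟩ := card_eq_two.1 hcard
    have hmem : ∀ y, y ∈ p.parts ↔ y = a ∨ y = b := fun y => by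
      rw [← Multiset.mem_toFinset, hset]; simp
    have hparts : p.parts = Multiset.replicate (p.parts.count a) a +
        Multiset.replicate (p.parts.count b) b := by
      ext y
      rw [Multiset.count_add, Multiset.count_replicate, Multiset.count_replicate]
      by_cases hya : a = y
      · subst hya; simp [Ne.symm hab]
      · by_cases hyb : b = y
        · subst hyb; simp [hab]
        · simp only [hya, hyb, if_false, add_zero]
          exact Multiset.count_eq_zero.2 fun h =>
            ((hmem y).1 h).elim (fun h => hya h.symm) (fun h => hyb h.symm)
    have ha := hadm a ((hmem a).2 (Or.inl rfl))
    have hb := hadm b ((hmem b).2 (Or.inr rfl))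
    have hi0 : p.parts.count a ≠ 0 := Multiset.count_ne_zero.2 ((hmem a).2 (Or.inl rfl))
    have hj0 : p.parts.count b ≠ 0 := Multiset.count_ne_zero.2 ((hmem b).2 (Or.inr rfl))
    have ha0 : a ≠ 0 := by rintro rfl; simp at ha
    have hb0 : b ≠ 0 := by rintro rfl; simp at hb
    have hsum : a * p.parts.count a + b * p.parts.count b = m := by
      have := congrArg Multiset.sum hparts
      rw [p.parts_sum] at this
      simpa [mul_comm] using this.symm
    generalize p.parts.count a = i at *
    generalize p.parts.count b = j at *
    by_cases hi : 2 ∣ i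
    · refine ⟨⟨(a * i, b * j), (a, i), (b, j)⟩, ?_, hparts.symm⟩
      simp only [mem_filter, mem_twoPartReps]
      exact ⟨⟨hsum, ⟨⟨trivial, mul_ne_zero ha0 hi0⟩, ha.1, ha.2, hi⟩,
        ⟨trivial, mul_ne_zero hb0 hj0⟩, hb⟩, hab⟩
    · have hj : 2 ∣ j := by
        by_contra hj
        rw [← even_iff_two_dvd, Nat.not_even_iff_odd] at hi hj
        have hae := ha.1
        have hbe := hb.1
        rw [← even_iff_two_dvd, Nat.not_even_iff_odd] at hae hbe
        exact h2 (hsum ▸ ((hae.mul hi).add_odd (hbe.mul hj)).two_dvd)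
      refine ⟨⟨(b * j, a * i), (b, j), (a, i)⟩, ?_, (hparts.trans (add_comm _ _)).symm⟩
      simp only [mem_filter, mem_twoPartReps]
      exact ⟨⟨by rw [add_comm]; exact hsum, ⟨⟨trivial, mul_ne_zero hb0 hj0⟩, hb.1, hb.2, hj⟩,
        ⟨trivial, mul_ne_zero ha0 hi0⟩, ha⟩, Ne.symm hab⟩

theorem B29_mod8_12n7_and_mod2_12n1 (n : ℕ) :
    8 ∣ biregOverpartitions 2 9 (12 * n + 7) ∧ 2 ∣ biregOverpartitions 2 9 (12 * n + 1) := by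
  refine ⟨?_, two_dvd_biregOverpartitions (by omega)⟩
  set m := 12 * n + 7 with hm
  have h2 : ¬ 2 ∣ m := by omega
  have h3 : ¬ 3 ∣ m := by omega
  have hmod := biregOverpartitions_modEq (m := m) (by omega)
  have hsplit := card_filter_add_card_filter_not (s := twoPartReps m) (fun r => r.2.1.1 = r.2.2.1)
  have hσ : ∑ e ∈ m.divisors, e = m.divisors.card + 2 * ∑ e ∈ m.divisors, (e - 1) / 2 := by
    rw [card_eq_sum_ones, mul_sum, ← sum_add_distrib]
    refine sum_congr rfl fun e he => ?_
    have : ¬ 2 ∣ e := fun h => h2 (h.trans (Nat.dvd_of_mem_divisors he))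
    omega
  have hσ4 := four_dvd_sum_divisors (m := m) (by omega)
  obtain ⟨k, hk⟩ := even_card_twoPartReps (m := m) (by omega)
  rw [card_admissiblePartitions_one h2 h3, card_admissiblePartitions_two h2] at hmod
  rw [card_twoPartReps_eq h2 h3] at hsplit
  unfold Nat.ModEq at hmod
  omega
end

section
/- For all integers n ≥ 0, B̄_{2,9}(18n+15) ≡ 0 (mod 3) and B̄_{2,9}(54n+45) ≡ 0 (mod 3). -/
namespace BiregularOverpartition

open PowerSeries Finset Filter Topology
open scoped PowerSeries.WithPiTopology

section Gauss

variable (K : Type*) [Field K]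

/-- The reciprocal of `1 + q ^ (i + 1)`. -/
noncomputable def invOneAdd (i : ℕ) : K⟦X⟧ := (1 + X ^ (i + 1))⁻¹

lemma one_add_mul_invOneAdd (i : ℕ) : (1 + X ^ (i + 1)) * invOneAdd K i = 1 :=
  PowerSeries.mul_inv_cancel _ (by simp)

/-- The partial product `∏_{k ≤ n} (1 - q ^ k) / (1 + q ^ k)`. -/
noncomputable def gaussProd (n : ℕ) : K⟦X⟧ :=
  ∏ i ∈ range n, ((1 - X ^ (i + 1)) * invOneAdd K i)

/-- The summands of a Rogers–Fine type expansion of Gauss's product. -/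
noncomputable def fineTerm (j m : ℕ) : K⟦X⟧ :=
  X ^ ((j + 1) * m) * (∏ i ∈ range m, (1 - X ^ (j + i + 1))) *
    ∏ i ∈ range (m + 1), invOneAdd K (j + i)

/-- The telescoping certificate for the recurrence between `fineTerm j` and `fineTerm (j + 1)`. -/
noncomputable def fineCert (j m : ℕ) : K⟦X⟧ :=
  X ^ ((j + 1) * (m + 1)) * (∏ i ∈ range m, (1 - X ^ (j + i + 2))) *
    ∏ i ∈ range (m + 1), invOneAdd K (j + i)

lemma fineTerm_succ_add (j m : ℕ) :
    fineTerm K j (m + 1) + X ^ (2 * j + 3) * fineTerm K (j + 1) m =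
      fineCert K j m - fineCert K j (m + 1) := by
  have hA : ∏ i ∈ range (m + 1), (1 - (X : K⟦X⟧) ^ (j + i + 1)) =
      (∏ i ∈ range m, (1 - X ^ (j + i + 2))) * (1 - X ^ (j + 1)) := by
    rw [prod_range_succ']
    rfl
  have hA' : ∏ i ∈ range m, (1 - (X : K⟦X⟧) ^ (j + 1 + i + 1)) =
      ∏ i ∈ range m, (1 - X ^ (j + i + 2)) :=
    prod_congr rfl fun i _ ↦ by rw [show j + 1 + i + 1 = j + i + 2 by ring]
  have hB : ∏ i ∈ range (m + 1), invOneAdd K (j + 1 + i) = (1 + X ^ (j + 1)) *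
      ((∏ i ∈ range (m + 1), invOneAdd K (j + i)) * invOneAdd K (j + m + 1)) := by
    rw [show j + m + 1 = j + (m + 1) by ring, ← prod_range_succ, prod_range_succ' _ (m + 1),
      add_zero, mul_comm _ (invOneAdd K j), ← mul_assoc, one_add_mul_invOneAdd, one_mul]
    exact prod_congr rfl fun i _ ↦ by rw [show j + 1 + i = j + (i + 1) by ring]
  have hv := one_add_mul_invOneAdd K (j + m + 1)
  simp only [fineTerm, fineCert]
  rw [prod_range_succ _ (m + 1), hA, hA', hB, prod_range_succ (fun i ↦ 1 - X ^ (j + i + 2)) m,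
    show j + (m + 1) = j + m + 1 by ring]
  generalize ∏ i ∈ range (m + 1), invOneAdd K (j + i) = B
  generalize ∏ i ∈ range m, (1 - (X : K⟦X⟧) ^ (j + i + 2)) = A
  generalize invOneAdd K (j + m + 1) = v at *
  linear_combination (X ^ ((j + 1) * (m + 1)) * A * B) * hv

lemma fineTerm_zero_add (j : ℕ) : fineTerm K j 0 + fineCert K j 0 = 1 := by
  have := one_add_mul_invOneAdd K j
  simp only [fineTerm, fineCert, mul_zero, zero_add, mul_one, range_zero, prod_empty,
    range_one, prod_singleton, pow_zero, one_mul, add_zero]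
  linear_combination this

lemma sum_fineTerm_add (j L : ℕ) :
    (∑ m ∈ range (L + 1), fineTerm K j m) + X ^ (2 * j + 3) * ∑ m ∈ range L, fineTerm K (j + 1) m =
      1 - fineCert K j L := by
  induction L with
  | zero => simpa using eq_sub_of_add_eq (fineTerm_zero_add K j)
  | succ L ih =>
    rw [sum_range_succ, sum_range_succ (fineTerm K (j + 1))]
    linear_combination ih + fineTerm_succ_add K j L

lemma X_pow_dvd_sum_fineTerm_sub (L j : ℕ) :
    X ^ L ∣ (∑ m ∈ range L, fineTerm K j m) -
      ∑ n ∈ range L, (-1) ^ n * X ^ (n ^ 2 + 2 * n * (j + 1)) := by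
  induction L generalizing j with
  | zero => simp
  | succ L ih =>
    have hc : (X : K⟦X⟧) ^ (L + 1) ∣ fineCert K j L := by
      rw [fineCert, mul_assoc]
      exact (pow_dvd_pow _ (Nat.le_mul_of_pos_left _ j.succ_pos)).mul_right _
    have hr : (X : K⟦X⟧) ^ (L + 1) ∣ X ^ (2 * j + 3) * ((∑ m ∈ range L, fineTerm K (j + 1) m) -
        ∑ n ∈ range L, (-1) ^ n * X ^ (n ^ 2 + 2 * n * (j + 1 + 1))) := by
      rw [pow_succ']
      exact mul_dvd_mul (dvd_pow_self _ (by omega)) (ih (j + 1))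
    have hs : ∑ n ∈ range (L + 1), (-1) ^ n * (X : K⟦X⟧) ^ (n ^ 2 + 2 * n * (j + 1)) =
        1 - X ^ (2 * j + 3) *
          ∑ n ∈ range L, (-1) ^ n * X ^ (n ^ 2 + 2 * n * (j + 1 + 1)) := by
      rw [sum_range_succ', mul_sum, sub_eq_neg_add, ← sum_neg_distrib]
      congr 1
      · refine sum_congr rfl fun n _ ↦ ?_
        ring
      · simp
    have h := sum_fineTerm_add K j L
    rw [show (∑ m ∈ range (L + 1), fineTerm K j m) -
        ∑ n ∈ range (L + 1), (-1) ^ n * (X : K⟦X⟧) ^ (n ^ 2 + 2 * n * (j + 1)) =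
        - fineCert K j L - X ^ (2 * j + 3) * ((∑ m ∈ range L, fineTerm K (j + 1) m) -
        ∑ n ∈ range L, (-1) ^ n * X ^ (n ^ 2 + 2 * n * (j + 1 + 1))) by
      rw [hs]; linear_combination h]
    exact dvd_sub hc.neg_right hr

lemma gaussProd_eq (L : ℕ) :
    gaussProd K L = 1 - 2 * X * ∑ m ∈ range L, fineTerm K 0 m := by
  induction L with
  | zero => simp [gaussProd]
  | succ L ih =>
    have hv := one_add_mul_invOneAdd K L
    have ht : X * fineTerm K 0 L = X ^ (L + 1) * (gaussProd K L * invOneAdd K L) := by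
      simp only [fineTerm, gaussProd, prod_mul_distrib, prod_range_succ _ L, zero_add, one_mul]
      ring
    have hp : gaussProd K (L + 1) = gaussProd K L * ((1 - X ^ (L + 1)) * invOneAdd K L) :=
      prod_range_succ _ _
    rw [sum_range_succ, hp]
    linear_combination ih + 2 * ht + gaussProd K L * hv

/-- **Gauss's identity** in truncated form. -/
lemma X_pow_dvd_gaussProd_sub (L : ℕ) :
    X ^ L ∣ gaussProd K L - (1 + 2 * ∑ n ∈ range L, (-1) ^ (n + 1) * X ^ ((n + 1) ^ 2)) := by
  have hs : ∑ n ∈ range L, (-1) ^ (n + 1) * (X : K⟦X⟧) ^ ((n + 1) ^ 2) =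
      - X * ∑ n ∈ range L, (-1) ^ n * X ^ (n ^ 2 + 2 * n * (0 + 1)) := by
    rw [mul_sum]
    exact sum_congr rfl fun n _ ↦ by ring
  rw [gaussProd_eq, hs]
  convert (X_pow_dvd_sum_fineTerm_sub K L 0).mul_left (-2 * X) using 1
  ring

end Gauss

section Lattice

variable {ι κ : Type*}

/-- The power series `∑ i, w i * q ^ d i` over `ZMod 3`. -/
noncomputable def latticeSum (d : ι → ℕ) (w : ι → ZMod 3) : (ZMod 3)⟦X⟧ :=
  ∑' i, monomial (d i) (w i)

/-- A degree function each of whose sublevel sets is finite. -/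
def FiniteDegree (d : ι → ℕ) : Prop := ∀ n, {i | d i ≤ n}.Finite

lemma FiniteDegree.add {d : ι → ℕ} {e : κ → ℕ} (hd : FiniteDegree d) (he : FiniteDegree e) :
    FiniteDegree fun p : ι × κ ↦ d p.1 + e p.2 := fun n ↦
  ((hd n).prod (he n)).subset fun p (hp : d p.1 + e p.2 ≤ n) ↦
    ⟨(Nat.le_add_right _ _).trans hp, (Nat.le_add_left _ _).trans hp⟩

lemma FiniteDegree.mul_left {d : ι → ℕ} (hd : FiniteDegree d) (k : ℕ) [NeZero k] :
    FiniteDegree fun i ↦ k * d i := fun n ↦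
  (hd n).subset fun _ hi ↦ (Nat.le_mul_of_pos_left _ (NeZero.pos k)).trans hi

lemma FiniteDegree.summable {d : ι → ℕ} (hd : FiniteDegree d) (w : ι → ZMod 3) :
    Summable fun i ↦ monomial (d i) (w i) := by
  rw [WithPiTopology.summable_iff_summable_coeff]
  intro n
  refine summable_of_hasFiniteSupport ((hd n).subset fun i hi ↦ ?_)
  rw [Function.mem_support, coeff_monomial] at hi
  exact (Ne.ite_ne_right_iff fun h ↦ hi (by simp [h])).1 hi |>.symm.le

lemma latticeSum_mul {d : ι → ℕ} {e : κ → ℕ} (hd : FiniteDegree d) (he : FiniteDegree e)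
    (w : ι → ZMod 3) (v : κ → ZMod 3) :
    latticeSum d w * latticeSum e v =
      latticeSum (fun p : ι × κ ↦ d p.1 + e p.2) fun p ↦ w p.1 * v p.2 := by
  have h := (hd.add he).summable fun p ↦ w p.1 * v p.2
  simp only [← monomial_mul_monomial] at h
  simp only [latticeSum, ← monomial_mul_monomial]
  exact (hd.summable w).tsum_mul_tsum (he.summable v) h

lemma latticeSum_add {d : ι → ℕ} (hd : FiniteDegree d) (w v : ι → ZMod 3) :
    latticeSum d w + latticeSum d v = latticeSum d (w + v) := by
  simp only [latticeSum, Pi.add_apply, map_add]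
  exact ((hd.summable w).tsum_add (hd.summable v)).symm

lemma latticeSum_eq_of_injective {f : κ → ι} (hf : f.Injective) {d : ι → ℕ} {w : ι → ZMod 3}
    (hw : ∀ i ∉ Set.range f, w i = 0) {e : κ → ℕ} {v : κ → ZMod 3}
    (hd : ∀ k, d (f k) = e k) (hv : ∀ k, w (f k) = v k) :
    latticeSum d w = latticeSum e v := by
  simp only [latticeSum, ← hd, ← hv]
  refine (hf.tsum_eq fun i hi ↦ ?_).symm
  by_contra h
  exact hi (by simp [hw i h])

lemma coeff_latticeSum_eq_zero {d : ι → ℕ} (hd : FiniteDegree d) {w : ι → ZMod 3} {n : ℕ}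
    (h : ∀ i, d i = n → w i = 0) : coeff n (latticeSum d w) = 0 := by
  have := (WithPiTopology.hasSum_iff_hasSum_coeff _).1 (hd.summable w).hasSum n
  refine this.unique (.congr_fun hasSum_zero fun i ↦ ?_)
  rw [coeff_monomial]
  split_ifs with hi
  · exact (h i hi.symm)
  · rfl

/-- The substitution `q ↦ q ^ k`. -/
noncomputable abbrev ex (k : ℕ) [NeZero k] : (ZMod 3)⟦X⟧ →ₐ[ZMod 3] (ZMod 3)⟦X⟧ :=
  expand k (NeZero.ne k)

lemma continuous_ex (k : ℕ) [NeZero k] : Continuous (ex k) := by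
  rw [continuous_iff_continuousAt]
  intro f
  rw [ContinuousAt, WithPiTopology.tendsto_iff_coeff_tendsto]
  intro n
  simp only [coeff_expand]
  split_ifs
  · exact (WithPiTopology.continuous_coeff _ _).tendsto f
  · exact tendsto_const_nhds

lemma ex_ex (k l : ℕ) [NeZero k] [NeZero l] (f : (ZMod 3)⟦X⟧) : ex k (ex l f) = ex (k * l) f :=
  (expand_mul k (NeZero.ne k) l (NeZero.ne l) f).symm

lemma ex_latticeSum (k : ℕ) [NeZero k] {d : ι → ℕ} (hd : FiniteDegree d) (w : ι → ZMod 3) :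
    ex k (latticeSum d w) = latticeSum (fun i ↦ k * d i) w := by
  rw [latticeSum, (hd.summable w).map_tsum (ex k) (continuous_ex k), latticeSum]
  exact tsum_congr fun i ↦ by rw [expand_monomial]

lemma pow_three_eq_ex (f : (ZMod 3)⟦X⟧) : f ^ 3 = ex 3 f := by
  have : Fact (Nat.Prime 3) := ⟨Nat.prime_three⟩
  have h := MvPowerSeries.map_frobenius_expand (σ := Unit) (R := ZMod 3) 3 three_ne_zero (f := f)
  rw [ZMod.frobenius_zmod, MvPowerSeries.map_id] at h
  exact h.symm

end Lattice

section Theta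

lemma finiteDegree_sq : FiniteDegree fun x : ℤ ↦ x.natAbs ^ 2 := fun n ↦
  (Set.finite_Icc (-(n : ℤ)) n).subset fun x (hx : x.natAbs ^ 2 ≤ n) ↦ by
    have : x.natAbs ≤ n := (Nat.le_self_pow two_ne_zero _).trans hx
    rw [Set.mem_Icc]
    omega

/-- `∑ (-1) ^ x * q ^ (x ^ 2)`, the theta series `φ(-q)` modulo 3. -/
noncomputable def theta : (ZMod 3)⟦X⟧ := latticeSum (fun x : ℤ ↦ x.natAbs ^ 2) fun x ↦ (-1) ^ x

/-- `∑ q ^ (x ^ 2)`, the theta series `φ(q)` modulo 3. -/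
noncomputable def thetaPos : (ZMod 3)⟦X⟧ := latticeSum (fun x : ℤ ↦ x.natAbs ^ 2) fun _ ↦ 1

/-- The part of `theta` coming from multiples of 3. -/
noncomputable def thetaDvd : (ZMod 3)⟦X⟧ :=
  latticeSum (fun x : ℤ ↦ x.natAbs ^ 2) fun x ↦ if 3 ∣ x then (-1) ^ x else 0

/-- The part of `theta` coming from non-multiples of 3. -/
noncomputable def thetaNotDvd : (ZMod 3)⟦X⟧ :=
  latticeSum (fun x : ℤ ↦ x.natAbs ^ 2) fun x ↦ if 3 ∣ x then 0 else (-1) ^ x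

lemma theta_eq_add : theta = thetaDvd + thetaNotDvd := by
  rw [thetaDvd, thetaNotDvd, latticeSum_add finiteDegree_sq, theta]
  congr 1
  ext x
  by_cases h : 3 ∣ x <;> simp [h]

lemma neg_one_zpow_eq_ite (x : ℤ) : (-1 : ZMod 3) ^ x = if Even x then 1 else -1 := by
  split_ifs with h
  · exact h.neg_one_zpow
  · exact (Int.not_even_iff_odd.1 h).neg_one_zpow

lemma thetaDvd_eq : thetaDvd = ex 9 theta := by
  rw [theta, ex_latticeSum 9 finiteDegree_sq]
  refine latticeSum_eq_of_injective (f := fun x ↦ 3 * x) (mul_right_injective₀ three_ne_zero)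
    (fun x hx ↦ if_neg fun ⟨y, hy⟩ ↦ hx ⟨y, hy.symm⟩) (fun x ↦ ?_) fun x ↦ ?_
  · rw [Int.natAbs_mul, mul_pow]
    rfl
  · simp [neg_one_zpow_eq_ite, Int.even_mul, show ¬ Even (3 : ℤ) by decide]

lemma constantCoeff_theta : constantCoeff theta = 1 := by
  have h := (WithPiTopology.hasSum_iff_hasSum_coeff _).1
    (finiteDegree_sq.summable fun x : ℤ ↦ (-1 : ZMod 3) ^ x).hasSum 0
  rw [← coeff_zero_eq_constantCoeff_apply, theta, latticeSum]
  refine h.unique ?_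
  convert! hasSum_ite_eq (0 : ℤ) (1 : ZMod 3) using 2 with x
  rw [coeff_monomial]
  by_cases hx : x = 0
  · simp [hx]
  · rw [if_neg hx, if_neg fun h ↦ hx (by simpa using h.symm)]

lemma thetaPos_mul_theta : thetaPos * theta = ex 2 theta ^ 2 := by
  have hd := finiteDegree_sq.add finiteDegree_sq
  have hodd : latticeSum (fun p : ℤ × ℤ ↦ p.1.natAbs ^ 2 + p.2.natAbs ^ 2)
      (fun p ↦ if Even (p.1 + p.2) then 0 else (-1) ^ p.2) = 0 := by
    have hswap : latticeSum (fun p : ℤ × ℤ ↦ p.1.natAbs ^ 2 + p.2.natAbs ^ 2)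
        (fun p ↦ if Even (p.1 + p.2) then 0 else (-1) ^ p.2) =
        latticeSum (fun p : ℤ × ℤ ↦ p.1.natAbs ^ 2 + p.2.natAbs ^ 2)
        (fun p ↦ if Even (p.1 + p.2) then 0 else (-1) ^ p.1) :=
      latticeSum_eq_of_injective (f := Prod.swap) Prod.swap_injective
        (fun p hp ↦ (hp ⟨p.swap, p.swap_swap⟩).elim) (fun p ↦ add_comm _ _)
        fun p ↦ by simp [add_comm]
    have hsum := latticeSum_add hd (fun p ↦ if Even (p.1 + p.2) then 0 else (-1) ^ p.2)
      (fun p ↦ if Even (p.1 + p.2) then 0 else (-1) ^ p.1)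
    rw [← hswap] at hsum
    have hz : ((fun p : ℤ × ℤ ↦ if Even (p.1 + p.2) then 0 else (-1 : ZMod 3) ^ p.2) +
        fun p ↦ if Even (p.1 + p.2) then 0 else (-1) ^ p.1) = 0 := by
      ext p
      by_cases h1 : Even p.1 <;> by_cases h2 : Even p.2 <;>
        simp [neg_one_zpow_eq_ite, Int.even_add, h1, h2]
    rw [hz, ← two_mul, show latticeSum _ (0 : ℤ × ℤ → ZMod 3) = 0 by
      simp [latticeSum]] at hsum
    have h2 : (2 : (ZMod 3)⟦X⟧) * 2 = 1 := by
      rw [← map_ofNat (C (R := ZMod 3)) 2, ← map_mul, ← map_one (C (R := ZMod 3))]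
      rfl
    linear_combination 2 * hsum - latticeSum (fun p : ℤ × ℤ ↦ p.1.natAbs ^ 2 + p.2.natAbs ^ 2)
      (fun p ↦ if Even (p.1 + p.2) then 0 else (-1) ^ p.2) * h2
  have heven : latticeSum (fun p : ℤ × ℤ ↦ p.1.natAbs ^ 2 + p.2.natAbs ^ 2)
      (fun p ↦ if Even (p.1 + p.2) then (-1) ^ p.2 else 0) = ex 2 theta ^ 2 := by
    rw [theta, ex_latticeSum 2 finiteDegree_sq, sq,
      latticeSum_mul (finiteDegree_sq.mul_left 2) (finiteDegree_sq.mul_left 2)]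
    refine latticeSum_eq_of_injective (f := fun p : ℤ × ℤ ↦ (p.1 + p.2, p.1 - p.2))
      (fun p q h ↦ ?_) (fun p hp ↦ if_neg fun ⟨r, hr⟩ ↦ hp ⟨(r, p.1 - r), ?_⟩) (fun p ↦ ?_)
      fun p ↦ ?_
    · simp only [Prod.mk.injEq] at h
      ext <;> omega
    · zify
      simp only [sq_abs]
      ring
    · rw [if_pos ⟨p.1, by ring⟩]
      by_cases h1 : Even p.1 <;> by_cases h2 : Even p.2 <;>
        simp [neg_one_zpow_eq_ite, Int.even_sub, h1, h2]
    · ext <;> grind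
  rw [← heven, ← add_zero (latticeSum _ _), ← hodd, latticeSum_add hd, thetaPos, theta,
    latticeSum_mul finiteDegree_sq finiteDegree_sq]
  congr 1
  ext p
  by_cases h : Even (p.1 + p.2) <;> simp [h]

lemma three_eq_zero : (3 : (ZMod 3)⟦X⟧) = 0 := by
  rw [← map_ofNat (C (R := ZMod 3)) 3, ← map_zero (C (R := ZMod 3))]
  rfl

/-- Multiplication by `1 + √-2` on `ℤ[√-2]`, whose image is the lattice `x ≡ y (mod 3)`. -/
lemma ex_three_thetaPos_mul :
    ex 3 (thetaPos * ex 2 theta) =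
      latticeSum (fun p : ℤ × ℤ ↦ p.1.natAbs ^ 2 + 2 * p.2.natAbs ^ 2)
        fun p ↦ if 3 ∣ p.1 - p.2 then (-1) ^ (p.1 + p.2) else 0 := by
  rw [thetaPos, theta, ex_latticeSum 2 finiteDegree_sq,
    latticeSum_mul finiteDegree_sq (finiteDegree_sq.mul_left 2),
    ex_latticeSum 3 (finiteDegree_sq.add (finiteDegree_sq.mul_left 2))]
  refine (latticeSum_eq_of_injective (f := fun p : ℤ × ℤ ↦ (p.1 - 2 * p.2, p.1 + p.2))
    (fun p q h ↦ ?_) (fun p hp ↦ if_neg fun ⟨r, hr⟩ ↦ hp ⟨(p.2 + r, -r), ?_⟩) (fun p ↦ ?_)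
    fun p ↦ ?_).symm
  · simp only [Prod.mk.injEq] at h
    ext <;> omega
  · zify
    simp only [sq_abs]
    ring
  · rw [if_pos ⟨-p.2, by ring⟩]
    by_cases h1 : Even p.1 <;> by_cases h2 : Even p.2 <;>
      simp [neg_one_zpow_eq_ite, Int.even_add, Int.even_sub, h1, h2]
  · ext <;> grind

lemma ex_three_thetaPos_mul_eq :
    ex 3 (thetaPos * ex 2 theta) =
      thetaDvd * ex 2 thetaDvd + 2 * (thetaNotDvd * ex 2 thetaNotDvd) := by
  have hd := finiteDegree_sq.add (finiteDegree_sq.mul_left 2)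
  have hneg : ex 3 (thetaPos * ex 2 theta) =
      latticeSum (fun p : ℤ × ℤ ↦ p.1.natAbs ^ 2 + 2 * p.2.natAbs ^ 2)
        fun p ↦ if 3 ∣ p.1 + p.2 then (-1) ^ (p.1 + p.2) else 0 := by
    rw [ex_three_thetaPos_mul]
    refine latticeSum_eq_of_injective (f := fun p : ℤ × ℤ ↦ (p.1, -p.2))
      (fun p q h ↦ ?_) (fun p hp ↦ (hp ⟨(p.1, -p.2), by simp⟩).elim) (fun p ↦ by simp)
      fun p ↦ ?_
    · simp only [Prod.mk.injEq] at h
      ext <;> omega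
    · simp [neg_one_zpow_eq_ite, Int.even_add]
  have hsum : ex 3 (thetaPos * ex 2 theta) + ex 3 (thetaPos * ex 2 theta) =
      thetaDvd * ex 2 thetaDvd + thetaDvd * ex 2 thetaDvd + thetaNotDvd * ex 2 thetaNotDvd := by
    nth_rewrite 1 [ex_three_thetaPos_mul]
    rw [hneg, thetaDvd, thetaNotDvd, ex_latticeSum 2 finiteDegree_sq,
      ex_latticeSum 2 finiteDegree_sq, latticeSum_mul finiteDegree_sq (finiteDegree_sq.mul_left 2),
      latticeSum_mul finiteDegree_sq (finiteDegree_sq.mul_left 2),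
      latticeSum_add hd, latticeSum_add hd, latticeSum_add hd]
    congr 1
    ext p
    simp only [Pi.add_apply, zpow_add₀ (neg_ne_zero.2 (one_ne_zero (α := ZMod 3)))]
    by_cases h1 : 3 ∣ p.1 <;> by_cases h2 : 3 ∣ p.2
    · simp [h1, h2, dvd_sub, dvd_add]
    · rw [if_neg (by omega), if_neg (by omega)]
      simp [h1, h2]
    · rw [if_neg (by omega), if_neg (by omega)]
      simp [h1, h2]
    · by_cases h : 3 ∣ p.1 - p.2
      · rw [if_pos h, if_neg (by omega)]
        simp [h1, h2]
      · have h' : 3 ∣ p.1 + p.2 := by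
          rcases (by omega : p.1 % 3 = 1 ∨ p.1 % 3 = 2) with h3 | h3 <;> omega
        rw [if_neg h, if_pos h']
        simp [h1, h2]
  linear_combination 2 * hsum - three_eq_zero * (ex 3 (thetaPos * ex 2 theta) -
    thetaDvd * ex 2 thetaDvd)

/-- Only exponents congruent to `c` modulo 3 occur in the power series `f`. -/
def SupportedMod (c : ZMod 3) (f : (ZMod 3)⟦X⟧) : Prop := ∀ n : ℕ, (n : ZMod 3) ≠ c → coeff n f = 0

lemma SupportedMod.mul {c e : ZMod 3} {f g : (ZMod 3)⟦X⟧} (hf : SupportedMod c f)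
    (hg : SupportedMod e g) : SupportedMod (c + e) (f * g) := by
  intro n hn
  rw [coeff_mul]
  refine sum_eq_zero fun p hp ↦ ?_
  rw [HasAntidiagonal.mem_antidiagonal] at hp
  by_cases h1 : (p.1 : ZMod 3) = c
  · rw [hg p.2 fun h2 ↦ hn (by rw [← hp, Nat.cast_add, h1, h2]), mul_zero]
  · rw [hf _ h1, zero_mul]

lemma SupportedMod.ex {c : ZMod 3} {f : (ZMod 3)⟦X⟧} (hf : SupportedMod c f) (k : ℕ) [NeZero k] :
    SupportedMod (k * c) (ex k f) := by
  intro n hn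
  rw [coeff_expand]
  split_ifs with h
  · obtain ⟨m, rfl⟩ := h
    rw [Nat.mul_div_cancel_left _ (NeZero.pos k)]
    exact hf m fun hm ↦ hn (by rw [Nat.cast_mul, hm])
  · rfl

lemma supportedMod_ex_three (f : (ZMod 3)⟦X⟧) : SupportedMod 0 (BiregularOverpartition.ex 3 f) :=
  fun n hn ↦ coeff_expand_of_not_dvd 3 _ f fun h ↦ hn ((ZMod.natCast_eq_zero_iff n 3).2 h)

lemma supportedMod_thetaDvd : SupportedMod 0 thetaDvd := by
  rw [thetaDvd_eq, ← ex_ex 3 3]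
  exact supportedMod_ex_three _

lemma supportedMod_thetaNotDvd : SupportedMod 1 thetaNotDvd := by
  intro n hn
  refine coeff_latticeSum_eq_zero finiteDegree_sq fun x hx ↦ if_pos ?_
  refine (ZMod.intCast_zmod_eq_zero_iff_dvd x 3).1 ?_
  have h : ((x.natAbs ^ 2 : ℕ) : ZMod 3) = (x : ZMod 3) ^ 2 := by
    rw [← Int.cast_natCast, Nat.cast_pow, Int.natAbs_sq, Int.cast_pow]
  rw [← hx, h] at hn
  generalize (x : ZMod 3) = y at hn
  revert y
  decide

lemma coeff_theta_mul_ex_three (n : ℕ) : coeff (6 * n + 5) (theta * ex 3 theta) = 0 := by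
  have h : ((6 * n + 5 : ℕ) : ZMod 3) = 2 := by
    push_cast
    generalize (n : ZMod 3) = y
    revert y
    decide
  have hs := supportedMod_ex_three theta
  rw [theta_eq_add, add_mul, ← theta_eq_add, map_add,
    supportedMod_thetaDvd.mul hs _ (by rw [h]; decide),
    supportedMod_thetaNotDvd.mul hs _ (by rw [h]; decide), add_zero]

lemma coeff_theta_mul_ex_three_of_three_dvd (n : ℕ) : coeff (18 * n + 15) (theta * ex 3 theta) = 0 := by
  have h : ((18 * n + 15 : ℕ) : ZMod 3) = 0 := by
    rw [ZMod.natCast_eq_zero_iff]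
    omega
  have hs := supportedMod_ex_three theta
  rw [theta_eq_add, add_mul, ← theta_eq_add, map_add,
    supportedMod_thetaNotDvd.mul hs _ (by rw [h]; decide), add_zero, thetaDvd_eq, ← ex_ex 3 3,
    ← map_mul, show 18 * n + 15 = 3 * (6 * n + 5) by ring, coeff_expand_mul,
    mul_comm (ex 3 theta),
    coeff_theta_mul_ex_three]

lemma tendsto_gaussProd : Tendsto (gaussProd (ZMod 3)) atTop (𝓝 theta) := by
  have h := (finiteDegree_sq.summable fun x : ℤ ↦ (-1 : ZMod 3) ^ x).hasSum.nat_add_neg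
  have h := (tendsto_add_atTop_iff_nat 1).2 h.tendsto_sum_nat
  rw [WithPiTopology.tendsto_iff_coeff_tendsto] at h ⊢
  intro n
  have hn := (h n).sub_const (coeff n (1 : (ZMod 3)⟦X⟧))
  rw [show (1 : (ZMod 3)⟦X⟧) = monomial (Int.natAbs 0 ^ 2) ((-1) ^ (0 : ℤ)) by simp] at hn
  rw [map_add, add_sub_cancel_right] at hn
  refine hn.congr' ?_
  filter_upwards [eventually_gt_atTop n] with L hL
  have hg := X_pow_dvd_iff.1 (X_pow_dvd_gaussProd_sub (ZMod 3) L) n hL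
  rw [map_sub, sub_eq_zero] at hg
  rw [hg, ← map_sub]
  congr 1
  rw [sum_range_succ', mul_sum, add_sub_assoc, add_comm]
  congr 1
  · simp
  · refine sum_congr rfl fun i _ ↦ ?_
    have hi : ((i + 1 : ℕ) : ℤ).natAbs = i + 1 := rfl
    rw [Int.natAbs_neg, hi, zpow_neg, ← inv_zpow, inv_neg_one, zpow_natCast,
      X_pow_eq, two_mul, ← map_one (C (R := ZMod 3)), ← map_neg, ← map_pow, ← smul_eq_C_mul,
      ← map_smul, smul_eq_mul, mul_one]

end Theta

section Product

/-- The weight of a part size `i` in a `(2, 9)`-biregular overpartition. -/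
def weight (i _c : ℕ) : ZMod 3 := if ¬ 2 ∣ i ∧ ¬ 9 ∣ i then 2 else 0

lemma coeff_genFun_weight (n : ℕ) :
    coeff n (Nat.Partition.genFun weight) = (biregOverpartitions 2 9 n : ZMod 3) := by
  rw [Nat.Partition.coeff_genFun, biregOverpartitions, Nat.cast_sum]
  refine sum_congr rfl fun p _ ↦ ?_
  simp only [Finsupp.prod, weight, Multiset.toFinsupp_support]
  rw [prod_ite_zero]
  simp

/-- The factor `(1 - q ^ m) / (1 + q ^ m)` for `m = i + 1`. -/
noncomputable def gaussFactor (i : ℕ) : (ZMod 3)⟦X⟧ := (1 - X ^ (i + 1)) * invOneAdd (ZMod 3) i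

lemma gaussFactor_mul (i : ℕ) : gaussFactor i * (1 + X ^ (i + 1)) = 1 - X ^ (i + 1) := by
  rw [gaussFactor, mul_assoc, mul_comm (invOneAdd _ _), one_add_mul_invOneAdd, mul_one]

lemma ex_gaussFactor (k : ℕ) [NeZero k] (i : ℕ) :
    ex k (gaussFactor i) = gaussFactor (k * (i + 1) - 1) := by
  have hk : k * (i + 1) - 1 + 1 = k * (i + 1) :=
    Nat.sub_add_cancel (Nat.mul_pos (NeZero.pos k) i.succ_pos)
  have h1 := congrArg (ex k) (gaussFactor_mul i)
  simp only [map_mul, map_add, map_sub, map_one, map_pow, expand_X, ← pow_mul] at h1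
  have h2 := gaussFactor_mul (k * (i + 1) - 1)
  have h3 := one_add_mul_invOneAdd (ZMod 3) (k * (i + 1) - 1)
  rw [hk] at h2 h3
  linear_combination (invOneAdd (ZMod 3) (k * (i + 1) - 1)) * (h1 - h2) +
    (gaussFactor (k * (i + 1) - 1) - ex k (gaussFactor i)) * h3

lemma prod_ite_dvd_eq_ex (k : ℕ) [NeZero k] (n : ℕ) :
    ∏ i ∈ range (k * n), (if k ∣ i + 1 then gaussFactor i else 1) =
      ex k (gaussProd (ZMod 3) n) := by
  induction n with
  | zero => simp [gaussProd]
  | succ n ih =>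
    have hk := NeZero.pos k
    rw [gaussProd, prod_range_succ, map_mul, ← gaussProd, ← ih, mul_add, mul_one, prod_range_add]
    congr 1
    rw [prod_eq_single_of_mem (k - 1) (mem_range.2 (by omega))]
    · rw [if_pos ⟨n + 1, by rw [mul_add]; omega⟩]
      refine Eq.trans ?_ (ex_gaussFactor k n).symm
      congr 1
      rw [mul_add]
      omega
    · intro i hi hne
      rw [mem_range] at hi
      refine if_neg fun h ↦ ?_
      rw [add_assoc, Nat.dvd_add_right (dvd_mul_right k n)] at h
      have := Nat.le_of_dvd i.succ_pos h
      omega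

/-- The factor of the generating function belonging to the part size `i + 1`. -/
noncomputable def partFactor (i : ℕ) : (ZMod 3)⟦X⟧ :=
  1 + ∑' j, weight (i + 1) (j + 1) • X ^ ((i + 1) * (j + 1))

lemma partFactor_mul_gaussFactor {i : ℕ} (h : ¬ 2 ∣ i + 1 ∧ ¬ 9 ∣ i + 1) :
    partFactor i * gaussFactor i = 1 := by
  have hc : constantCoeff ((X : (ZMod 3)⟦X⟧) ^ (i + 1)) = 0 := by simp
  have hg := WithPiTopology.one_sub_mul_tsum_pow_of_constantCoeff_eq_zero hc
  have hs := WithPiTopology.summable_pow_of_constantCoeff_eq_zero hc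
  have ht : ∑' j, weight (i + 1) (j + 1) • (X : (ZMod 3)⟦X⟧) ^ ((i + 1) * (j + 1)) =
      2 * X ^ (i + 1) * ∑' j : ℕ, (X ^ (i + 1)) ^ j := by
    rw [← hs.tsum_mul_left]
    refine tsum_congr fun j ↦ ?_
    rw [weight, if_pos h, smul_eq_C_mul, map_ofNat]
    ring
  have hv := one_add_mul_invOneAdd (ZMod 3) i
  rw [partFactor, ht, gaussFactor]
  linear_combination (2 * X ^ (i + 1) * invOneAdd (ZMod 3) i) * hg + hv

lemma partFactor_eq_one {i : ℕ} (h : ¬ (¬ 2 ∣ i + 1 ∧ ¬ 9 ∣ i + 1)) : partFactor i = 1 := by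
  simp only [partFactor, weight, if_neg h, zero_smul, tsum_zero, add_zero]

lemma partFactor_mul (i : ℕ) :
    partFactor i * gaussFactor i * (if 18 ∣ i + 1 then gaussFactor i else 1) =
      (if 2 ∣ i + 1 then gaussFactor i else 1) * (if 9 ∣ i + 1 then gaussFactor i else 1) := by
  by_cases h : ¬ 2 ∣ i + 1 ∧ ¬ 9 ∣ i + 1
  · rw [partFactor_mul_gaussFactor h, if_neg h.1, if_neg h.2, if_neg (by omega)]
  · rw [partFactor_eq_one h]
    by_cases h2 : 2 ∣ i + 1 <;> by_cases h9 : 9 ∣ i + 1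
    · rw [if_pos h2, if_pos h9, if_pos (by omega), one_mul]
    · rw [if_pos h2, if_neg h9, if_neg (by omega), one_mul]
    · rw [if_neg h2, if_pos h9, if_neg (by omega), mul_one]
    · exact (h ⟨h2, h9⟩).elim

lemma genFun_mul_theta :
    Nat.Partition.genFun weight * theta * ex 18 theta = ex 2 theta * ex 9 theta := by
  have hk (k : ℕ) (hk : 0 < k) : Tendsto (fun n : ℕ ↦ k * n) atTop atTop :=
    tendsto_id.const_mul_atTop' hk
  have hex (k l : ℕ) [NeZero k] (hl : 0 < l) :
      Tendsto (fun n ↦ ex k (gaussProd (ZMod 3) (l * n))) atTop (𝓝 (ex k theta)) :=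
    ((continuous_ex k).tendsto theta).comp (tendsto_gaussProd.comp (hk l hl))
  have hG : Tendsto (fun n ↦ ∏ i ∈ range (18 * n), partFactor i) atTop
      (𝓝 (Nat.Partition.genFun weight)) :=
    (Nat.Partition.hasProd_genFun weight).tendsto_prod_nat.comp (hk 18 (by norm_num))
  have hL := (hG.mul (tendsto_gaussProd.comp (hk 18 (by norm_num)))).mul (hex 18 1 one_pos)
  have hR := (hex 2 9 (by norm_num)).mul (hex 9 2 (by norm_num))
  refine tendsto_nhds_unique (hL.congr fun n ↦ ?_) hR
  rw [← prod_ite_dvd_eq_ex, ← prod_ite_dvd_eq_ex, ← prod_ite_dvd_eq_ex]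
  have hprod : (gaussProd (ZMod 3) ∘ fun n ↦ 18 * n) n = ∏ i ∈ range (18 * n), gaussFactor i := rfl
  rw [hprod, ← prod_mul_distrib, show 18 * (1 * n) = 18 * n by ring, ← prod_mul_distrib,
    show 2 * (9 * n) = 18 * n by ring, show 9 * (2 * n) = 18 * n by ring, ← prod_mul_distrib]
  exact prod_congr rfl fun i _ ↦ partFactor_mul i

end Product

section Congruence

lemma genFun_mul_ex :
    Nat.Partition.genFun weight * ex 18 theta = ex 3 (theta ^ 2) * (theta ^ 2 * ex 2 theta) := by
  have h9 : ex 9 theta = theta ^ 9 := by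
    rw [← ex_ex 3 3, ← pow_three_eq_ex, ← pow_three_eq_ex]
    ring
  have h0 : theta ≠ 0 := fun h ↦ by simpa [h] using constantCoeff_theta
  refine mul_left_cancel₀ h0 ?_
  have h := genFun_mul_theta
  rw [h9] at h
  rw [← pow_three_eq_ex]
  linear_combination h

lemma exists_genFun_sub_eq : ∃ f g : (ZMod 3)⟦X⟧, (∀ n, coeff (3 * n) g = 0) ∧
    Nat.Partition.genFun weight - ex 3 (theta * ex 3 theta) = ex 3 f * g := by
  refine ⟨theta ^ 2 * (ex 6 theta)⁻¹, 2 * (thetaDvd * thetaNotDvd * ex 2 thetaDvd) +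
    thetaNotDvd * thetaNotDvd * ex 2 thetaDvd + thetaDvd * thetaDvd * ex 2 thetaNotDvd +
    thetaNotDvd * thetaNotDvd * ex 2 thetaNotDvd, fun n ↦ ?_, ?_⟩
  · have h0 {c : ZMod 3} {g : (ZMod 3)⟦X⟧} (hg : SupportedMod c g) (hc : c ≠ 0) :
        coeff (3 * n) g = 0 :=
      hg _ (by rw [(ZMod.natCast_eq_zero_iff _ 3).2 (dvd_mul_right 3 n)]; exact hc.symm)
    have ha := supportedMod_thetaDvd
    have hb := supportedMod_thetaNotDvd
    rw [map_add, map_add, map_add, two_mul, map_add, h0 ((ha.mul hb).mul (ha.ex 2)) (by decide),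
      h0 ((hb.mul hb).mul (ha.ex 2)) (by decide), h0 ((ha.mul ha).mul (hb.ex 2)) (by decide),
      h0 ((hb.mul hb).mul (hb.ex 2)) (by decide)]
    simp
  · have hinv : ex 18 theta * ex 3 (ex 6 theta)⁻¹ = 1 := by
      rw [show ex 18 theta = ex 3 (ex 6 theta) from (ex_ex 3 6 theta).symm, ← map_mul,
        PowerSeries.mul_inv_cancel _ (by simp [constantCoeff_theta]), map_one]
    have hmain : theta ^ 2 * ex 2 theta = ex 3 (ex 3 theta * (thetaPos * ex 2 theta)) +
        (2 * (thetaDvd * thetaNotDvd * ex 2 thetaDvd) +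
        thetaNotDvd * thetaNotDvd * ex 2 thetaDvd + thetaDvd * thetaDvd * ex 2 thetaNotDvd +
        thetaNotDvd * thetaNotDvd * ex 2 thetaNotDvd) := by
      rw [map_mul, ex_three_thetaPos_mul_eq, ex_ex 3 3, ← thetaDvd_eq, theta_eq_add, map_add]
      ring
    have hcube : theta ^ 2 * (ex 3 theta * (thetaPos * ex 2 theta)) =
        theta * ex 3 theta * ex 6 theta := by
      rw [show ex 6 theta = ex 3 (ex 2 theta) from (ex_ex 3 2 theta).symm,
        ← pow_three_eq_ex (ex 2 theta)]
      linear_combination (theta * ex 3 theta * ex 2 theta) * thetaPos_mul_theta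
    have h := genFun_mul_ex
    rw [hmain, mul_add, ← map_mul, hcube, map_mul _ _ (ex 6 theta), ex_ex 3 6] at h
    rw [map_mul _ (theta ^ 2)]
    linear_combination (ex 3 (ex 6 theta)⁻¹) * h -
      (Nat.Partition.genFun weight - ex 3 (theta * ex 3 theta)) * hinv

lemma coeff_genFun_three_mul (n : ℕ) :
    coeff (3 * n) (Nat.Partition.genFun weight) = coeff n (theta * ex 3 theta) := by
  obtain ⟨f, g, hg, h⟩ := exists_genFun_sub_eq
  rw [← coeff_expand_mul 3 three_ne_zero (theta * ex 3 theta), ← sub_eq_zero, ← map_sub]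
  refine (congrArg (coeff (3 * n)) h).trans ?_
  rw [coeff_mul]
  refine sum_eq_zero fun p hp ↦ ?_
  rw [HasAntidiagonal.mem_antidiagonal] at hp
  by_cases h3 : 3 ∣ p.1
  · obtain ⟨m, hm⟩ : 3 ∣ p.2 := (Nat.dvd_add_right h3).1 (hp ▸ dvd_mul_right 3 n)
    rw [hm, hg, mul_zero]
  · rw [coeff_expand_of_not_dvd 3 _ f h3, zero_mul]

end Congruence

end BiregularOverpartition

open BiregularOverpartition in
theorem B29_mod3_18n15_and_54n45 (n : ℕ) :
    3 ∣ biregOverpartitions 2 9 (18 * n + 15) ∧ 3 ∣ biregOverpartitions 2 9 (54 * n + 45) := by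
  simp only [← ZMod.natCast_eq_zero_iff, ← coeff_genFun_weight]
  rw [show 18 * n + 15 = 3 * (6 * n + 5) by ring, show 54 * n + 45 = 3 * (18 * n + 15) by ring,
    coeff_genFun_three_mul, coeff_genFun_three_mul]
  exact ⟨coeff_theta_mul_ex_three n, coeff_theta_mul_ex_three_of_three_dvd n⟩
end
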